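/- arXiv:2412.21048 — 3 statements merged into one kernel-verified Lean document; each statement's English description precedes it below -/
import Mathlib

section
/- Fix an integer j with 1 ≤ j ≤ n−1 and define K_j(x,z) = binom(n−1, j) · ∫₀¹ χ(x) ψ(x + z/t) t^{−(n+1−j)} dt. Then for every α with 0 < α < 1 there is a constant C (depending on α, n, j, χ, ψ, d) such that for all x, x̄, y ∈ ℝⁿ with 0 < |x−y| ≤ |x̄−y| one has |K_j(x, x−y) − K_j(x̄, x̄−y)| ≤ C |x−x̄|^α / |x−y|^{n−j+α}. -/
open MeasureTheory Metric Set Filter Topology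


theorem aux_min {A D s v α : ℝ} (hA : 0 ≤ A) (hD : 0 ≤ D) (hs : 0 ≤ s) (hα0 : 0 < α) (hα1 : α < 1)
    (h1 : v ≤ A * s) (h2 : v ≤ D) : v ≤ (A + D) * s ^ α := by
  have hp : 0 ≤ s ^ α := Real.rpow_nonneg hs α
  rcases le_total s 1 with h | h
  · have : s ≤ s ^ α := by
      rcases hs.eq_or_lt with h0 | h0
      · rw [← h0]; exact Real.rpow_nonneg le_rfl α
      · calc s = s ^ (1:ℝ) := (Real.rpow_one s).symm
          _ ≤ s ^ α := Real.rpow_le_rpow_of_exponent_ge h0 h hα1.le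
    nlinarith [mul_le_mul_of_nonneg_left this hA, mul_nonneg hD hp]
  · have : 1 ≤ s ^ α := Real.one_le_rpow h hα0.le
    nlinarith [mul_le_mul_of_nonneg_left this hD, mul_nonneg hA hp]

theorem aux_pt {E : Type*} [NormedAddCommGroup E] [NormedSpace ℝ E] (χ ψ : E → ℝ)
    {Mc Mp Lc Lp : ℝ} (hMc0 : 0 ≤ Mc) (hMp0 : 0 ≤ Mp) (hLc0 : 0 ≤ Lc) (hLp0 : 0 ≤ Lp)
    (hMc : ∀ x, |χ x| ≤ Mc) (hMp : ∀ x, |ψ x| ≤ Mp)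
    (hLc : ∀ x y, |χ x - χ y| ≤ Lc * ‖x - y‖) (hLp : ∀ x y, |ψ x - ψ y| ≤ Lp * ‖x - y‖)
    {α : ℝ} (hα0 : 0 < α) (hα1 : α < 1) (x x' y : E) {t : ℝ} (ht0 : 0 < t) (ht1 : t < 1) :
    |χ x * ψ (x + t⁻¹ • (x - y)) - χ x' * ψ (x' + t⁻¹ • (x' - y))| ≤
      ((Lc * Mp + 2 * Mc * Lp) + 2 * Mc * Mp) * (‖x - x'‖ * t⁻¹) ^ α := by
  have hti : 1 ≤ t⁻¹ := (one_le_inv₀ ht0).2 ht1.le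
  have hN : 0 ≤ ‖x - x'‖ := norm_nonneg _
  have key : ∀ a b c e : ℝ, |a * b - c * e| ≤ |a - c| * |b| + |c| * |b - e| := by
    intro a b c e
    rw [← abs_mul, ← abs_mul]
    calc |a * b - c * e| = |(a - c) * b + c * (b - e)| := by ring_nf
      _ ≤ _ := abs_add_le _ _
  have hu : ‖(x + t⁻¹ • (x - y)) - (x' + t⁻¹ • (x' - y))‖ ≤ 2 * (‖x - x'‖ * t⁻¹) := by
    have : (x + t⁻¹ • (x - y)) - (x' + t⁻¹ • (x' - y)) = (1 + t⁻¹) • (x - x') := by module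
    rw [this, norm_smul, Real.norm_of_nonneg (by linarith)]
    nlinarith
  have hle : ‖x - x'‖ ≤ ‖x - x'‖ * t⁻¹ := by nlinarith
  apply aux_min (by positivity) (by positivity) (by positivity) hα0 hα1
  · refine (key _ _ _ _).trans ?_
    have e1 : |χ x - χ x'| * |ψ (x + t⁻¹ • (x - y))| ≤ (Lc * (‖x - x'‖ * t⁻¹)) * Mp :=
      mul_le_mul ((hLc _ _).trans (by gcongr)) (hMp _) (abs_nonneg _) (by positivity)
    have e2 : |χ x'| * |ψ (x + t⁻¹ • (x - y)) - ψ (x' + t⁻¹ • (x' - y))| ≤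
        Mc * (Lp * (2 * (‖x - x'‖ * t⁻¹))) :=
      mul_le_mul (hMc _) ((hLp _ _).trans (by gcongr)) (abs_nonneg _) hMc0
    linarith
  · have e : ∀ a b, |χ a * ψ b| ≤ Mc * Mp := fun a b => by
      rw [abs_mul]; exact mul_le_mul (hMc _) (hMp _) (abs_nonneg _) hMc0
    have := abs_sub (χ x * ψ (x + t⁻¹ • (x - y))) (χ x' * ψ (x' + t⁻¹ • (x' - y)))
    linarith [e x (x + t⁻¹ • (x - y)), e x' (x' + t⁻¹ • (x' - y))]

theorem aux_supp {E : Type*} [NormedAddCommGroup E] [NormedSpace ℝ E] (χ ψ : E → ℝ)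
    {R : ℝ} (hR : 0 < R) (hc : ∀ x, χ x ≠ 0 → ‖x‖ < R) (hp : ∀ x, ψ x ≠ 0 → ‖x‖ < R)
    (x z : E) {t r : ℝ} (ht0 : 0 < t) (hr : r ≤ ‖z‖) (h : χ x * ψ (x + t⁻¹ • z) ≠ 0) :
    r / (2 * R) < t := by
  have h1 := hc _ (left_ne_zero_of_mul h)
  have h2 := hp _ (right_ne_zero_of_mul h)
  have h3 : ‖t⁻¹ • z‖ < 2 * R := by
    have : t⁻¹ • z = (x + t⁻¹ • z) - x := by abel
    rw [this]
    linarith [norm_sub_le (x + t⁻¹ • z) x]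
  rw [norm_smul, Real.norm_of_nonneg (by positivity), inv_mul_lt_iff₀ ht0] at h3
  rw [div_lt_iff₀ (by positivity)]
  linarith

theorem aux_int {E : Type*} [NormedAddCommGroup E] [NormedSpace ℝ E] (χ ψ : E → ℝ)
    (hψ : Continuous ψ) {Mc Mp : ℝ} (hMc0 : 0 ≤ Mc)
    (hMc : ∀ x, |χ x| ≤ Mc) (hMp : ∀ x, |ψ x| ≤ Mp)
    {R : ℝ} (hR : 0 < R) (hc : ∀ x, χ x ≠ 0 → ‖x‖ < R) (hp : ∀ x, ψ x ≠ 0 → ‖x‖ < R)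
    (x z : E) (hz : 0 < ‖z‖) (k : ℕ) :
    IntegrableOn (fun t : ℝ => χ x * ψ (x + t⁻¹ • z) * (t ^ k)⁻¹) (Ioo 0 1) := by
  have hMp0 : 0 ≤ Mp := (abs_nonneg _).trans (hMp 0)
  refine IntegrableOn.of_bound (by simp) ?_ (Mc * Mp * ((‖z‖ / (2 * R)) ^ k)⁻¹) ?_
  · apply ContinuousOn.aestronglyMeasurable _ measurableSet_Ioo
    have hi : ContinuousOn (fun t : ℝ => t⁻¹) (Ioo 0 1) :=
      continuousOn_inv₀.mono (fun t ht => ht.1.ne')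
    refine ContinuousOn.mul (continuousOn_const.mul ?_) ?_
    · exact hψ.comp_continuousOn (continuousOn_const.add (hi.smul continuousOn_const))
    · exact (continuousOn_pow k).inv₀ (fun t ht => (pow_pos ht.1 k).ne')
  · filter_upwards [ae_restrict_mem measurableSet_Ioo] with t ht
    by_cases h : χ x * ψ (x + t⁻¹ • z) = 0
    · rw [h, zero_mul, norm_zero]; positivity
    · have h1 := aux_supp χ ψ hR hc hp x z ht.1 le_rfl h
      have ht0 := ht.1
      rw [norm_mul, norm_mul, norm_inv, Real.norm_of_nonneg (pow_pos ht0 k).le]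
      have e1 : ‖χ x‖ * ‖ψ (x + t⁻¹ • z)‖ ≤ Mc * Mp :=
        mul_le_mul (hMc _) (hMp _) (norm_nonneg _) hMc0
      gcongr

theorem aux_consts {E : Type*} [NormedAddCommGroup E] [NormedSpace ℝ E] (f : E → ℝ)
    (hf : ContDiff ℝ (⊤ : ℕ∞) f) (hc : HasCompactSupport f) :
    ∃ M L R : ℝ, 0 ≤ M ∧ 0 ≤ L ∧ 0 < R ∧ (∀ x, |f x| ≤ M) ∧
      (∀ x y, |f x - f y| ≤ L * ‖x - y‖) ∧ (∀ x, f x ≠ 0 → ‖x‖ < R) := by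
  obtain ⟨M, hM⟩ := hc.exists_bound_of_continuous hf.continuous
  obtain ⟨L, hL⟩ := hf.lipschitzWith_of_hasCompactSupport hc (by simp)
  obtain ⟨R, hR0, hR⟩ := hc.isBounded.exists_pos_norm_lt
  refine ⟨M, L, R, (norm_nonneg _).trans (hM 0), L.2, hR0, hM, fun x y => ?_, fun x hx => ?_⟩
  · simpa [Real.norm_eq_abs] using hL.norm_sub_le x y
  · exact hR x (subset_tsupport _ hx)

/-- For `1 ≤ j ≤ n−1` and `0 < α < 1`, the kernel `K_j` satisfies
`|K_j(x, x−y) − K_j(x̄, x̄−y)| ≲ |x−x̄|^α / |x−y|^{n−j+α}` whenever `0 < |x−y| ≤ |x̄−y|`. -/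
theorem Kj_regularity_bound
    (n : ℕ) (hn : 2 ≤ n)
    (Ω B : Set (EuclideanSpace ℝ (Fin n)))
    (hΩo : IsOpen Ω) (hΩb : Bornology.IsBounded Ω)
    (hBball : ∃ c r, 0 < r ∧ B = Metric.ball c r)
    (hBΩ : B ⊆ Ω)
    (hstar : ∀ x ∈ Ω, ∀ y ∈ B, segment ℝ x y ⊆ Ω)
    (Bt : Set (EuclideanSpace ℝ (Fin n)))
    (hBt : ∃ c r, 0 < r ∧ Bt = Metric.ball c r)
    (hΩBt : closure Ω ⊆ Bt)
    (d : ℝ) (hd : d = Metric.diam Bt)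
    (χ : EuclideanSpace ℝ (Fin n) → ℝ)
    (hχ : ContDiff ℝ (⊤ : ℕ∞) χ) (hχc : HasCompactSupport χ)
    (hχsupp : tsupport χ ⊆ Bt) (hχ1 : ∀ x ∈ Ω, χ x = 1)
    (ψ : EuclideanSpace ℝ (Fin n) → ℝ)
    (hψ : ContDiff ℝ (⊤ : ℕ∞) ψ) (hψc : HasCompactSupport ψ)
    (hψsupp : tsupport ψ ⊆ B) (hψint : ∫ x, ψ x = 0)
    (j : ℕ) (hj1 : 1 ≤ j) (hjn : j ≤ n - 1)
    (Kj : EuclideanSpace ℝ (Fin n) → EuclideanSpace ℝ (Fin n) → ℝ)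
    (hKj : ∀ x z, Kj x z = (n - 1).choose j *
      ∫ t in Set.Ioo (0:ℝ) 1, χ x * ψ (x + t⁻¹ • z) * (t ^ (n + 1 - j))⁻¹) :
    ∀ α : ℝ, 0 < α → α < 1 → ∃ C : ℝ,
      ∀ x x' y : EuclideanSpace ℝ (Fin n), 0 < ‖x - y‖ → ‖x - y‖ ≤ ‖x' - y‖ →
        |Kj x (x - y) - Kj x' (x' - y)| ≤
          C * ‖x - x'‖ ^ α / ‖x - y‖ ^ ((n : ℝ) - j + α) := by
  intro α hα0 hα1
  obtain ⟨Mc, Lc, Rc, hMc0, hLc0, hRc0, hMc, hLc, hRc⟩ := aux_consts χ hχ hχc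
  obtain ⟨Mp, Lp, Rp, hMp0, hLp0, hRp0, hMp, hLp, hRp⟩ := aux_consts ψ hψ hψc
  obtain ⟨R, hR0, hRc', hRp'⟩ : ∃ R : ℝ, 0 < R ∧ (∀ x, χ x ≠ 0 → ‖x‖ < R) ∧
      (∀ x, ψ x ≠ 0 → ‖x‖ < R) :=
    ⟨max Rc Rp, lt_max_of_lt_left hRc0, fun x hx => (hRc x hx).trans_le (le_max_left _ _),
      fun x hx => (hRp x hx).trans_le (le_max_right _ _)⟩
  set A : ℝ := (Lc * Mp + 2 * Mc * Lp) + 2 * Mc * Mp with hA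
  have hA0 : 0 ≤ A := by positivity
  have hjn' : j + 1 ≤ n := by omega
  have hjnR : (j : ℝ) + 1 ≤ n := by exact_mod_cast hjn'
  set p : ℝ := (n : ℝ) - j + α with hp
  have hp0 : 0 < p := by linarith
  refine ⟨(n - 1).choose j * (A * ((2 * R) ^ p / p)), fun x x' y hr hr' => ?_⟩
  set r := ‖x - y‖ with hrdef
  have hI := aux_int χ ψ hψ.continuous hMc0 hMc hMp hR0 hRc' hRp' x (x - y) hr (n + 1 - j)
  have hI' := aux_int χ ψ hψ.continuous hMc0 hMc hMp hR0 hRc' hRp' x' (x' - y)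
    (hr.trans_le hr') (n + 1 - j)
  have hapos : 0 < r / (2 * R) := by positivity
  have hg : IntegrableOn (fun t : ℝ => A * ‖x - x'‖ ^ α * t ^ (-p - 1)) (Ioi (r / (2 * R))) :=
    (integrableOn_Ioi_rpow_of_lt (by linarith) hapos).const_mul _
  have hmain : |(∫ t in Ioo (0:ℝ) 1, χ x * ψ (x + t⁻¹ • (x - y)) * (t ^ (n + 1 - j))⁻¹) -
      ∫ t in Ioo (0:ℝ) 1, χ x' * ψ (x' + t⁻¹ • (x' - y)) * (t ^ (n + 1 - j))⁻¹| ≤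
      ∫ t in Ioi (r / (2 * R)), A * ‖x - x'‖ ^ α * t ^ (-p - 1) := by
    rw [← integral_sub hI hI', ← integral_indicator measurableSet_Ioo,
      ← integral_indicator measurableSet_Ioi, ← Real.norm_eq_abs]
    refine norm_integral_le_of_norm_le ((integrable_indicator_iff measurableSet_Ioi).2 hg)
      (Eventually.of_forall fun t => ?_)
    have hind : 0 ≤ (Ioi (r / (2 * R))).indicator
        (fun t : ℝ => A * ‖x - x'‖ ^ α * t ^ (-p - 1)) t := by
      apply indicator_nonneg
      intro t ht
      have : 0 < t := hapos.trans ht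
      positivity
    by_cases ht : t ∈ Ioo (0:ℝ) 1
    swap
    · rw [indicator_of_notMem ht, norm_zero]; exact hind
    rw [indicator_of_mem ht]
    have ht0 := ht.1
    by_cases hta : r / (2 * R) < t
    · rw [indicator_of_mem (show t ∈ Ioi (r / (2 * R)) from hta), ← sub_mul, norm_mul, norm_inv,
        Real.norm_of_nonneg (pow_pos ht0 _).le]
      have h1 := aux_pt χ ψ hMc0 hMp0 hLc0 hLp0 hMc hMp hLc hLp hα0 hα1 x x' y ht0 ht.2
      have h2 : A * ‖x - x'‖ ^ α * t ^ (-p - 1) =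
          (A * (‖x - x'‖ * t⁻¹) ^ α) * (t ^ (n + 1 - j))⁻¹ := by
        rw [Real.mul_rpow (norm_nonneg _) (by positivity), Real.inv_rpow ht0.le,
          ← Real.rpow_neg ht0.le, ← Real.rpow_natCast, ← Real.rpow_neg ht0.le,
          Nat.cast_sub (by omega), mul_assoc, mul_assoc, mul_assoc, ← Real.rpow_add ht0]
        congr 3
        rw [hp]; push_cast; ring
      rw [h2]
      exact mul_le_mul_of_nonneg_right h1 (by positivity)
    · have h1 : χ x * ψ (x + t⁻¹ • (x - y)) = 0 := by
        by_contra h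
        exact hta (aux_supp χ ψ hR0 hRc' hRp' x _ ht0 le_rfl h)
      have h2 : χ x' * ψ (x' + t⁻¹ • (x' - y)) = 0 := by
        by_contra h
        exact hta (aux_supp χ ψ hR0 hRc' hRp' x' _ ht0 hr' h)
      simp only [h1, h2, zero_mul, sub_zero, norm_zero]
      exact hind
  rw [hKj, hKj, ← mul_sub, abs_mul, Nat.abs_cast]
  refine (mul_le_mul_of_nonneg_left hmain (Nat.cast_nonneg _)).trans (le_of_eq ?_)
  rw [integral_const_mul, integral_Ioi_rpow_of_lt (by linarith) hapos]
  rw [show -p - 1 + 1 = -p by ring, Real.rpow_neg hapos.le,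
    Real.div_rpow hr.le (by positivity)]
  have hrp : 0 < r ^ p := Real.rpow_pos_of_pos hr p
  have hRp2 : 0 < (2 * R) ^ p := Real.rpow_pos_of_pos (by positivity) p
  field_simp
end

section
/- Fix an integer j with 1 ≤ j ≤ n−1, define K_j(x,z) = binom(n−1, j) · ∫₀¹ χ(x) ψ(x + z/t) t^{−(n+1−j)} dt, and set S_j1(x) = ∫_{ℝⁿ} χ(y) K_j(x, x−y) dy (an absolutely convergent integral). Then for every α with 0 < α < 1 there is a constant C such that |S_j1(x) − S_j1(x̄)| ≤ C |x−x̄|^α for all x, x̄ ∈ ℝⁿ, i.e. S_j1 belongs to the homogeneous Lipschitz space Λ̇_α(ℝⁿ). -/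
open MeasureTheory Metric Set Filter Topology

lemma aux_cov {n : ℕ} (f g : EuclideanSpace ℝ (Fin n) → ℝ) (x : EuclideanSpace ℝ (Fin n))
    {t : ℝ} (ht : 0 < t) :
    ∫ y, f y * g (x + t⁻¹ • (x - y)) =
      t ^ n * ∫ w, f ((1 + t) • x - t • w) * g w := by
  have h1 := integral_sub_left_eq_self (μ := (volume : Measure (EuclideanSpace ℝ (Fin n))))
    (fun y => f y * g (x + t⁻¹ • (x - y))) ((1 + t) • x)
  have h2 := Measure.integral_comp_smul (volume : Measure (EuclideanSpace ℝ (Fin n)))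
    (fun u => f ((1 + t) • x - u) * g (x + t⁻¹ • (x - ((1 + t) • x - u)))) t
  have h3 : ∀ w : EuclideanSpace ℝ (Fin n),
      x + t⁻¹ • (x - ((1 + t) • x - t • w)) = w := by
    intro w
    have : x - ((1 + t) • x - t • w) = t • (w - x) := by module
    rw [this, smul_smul, inv_mul_cancel₀ ht.ne', one_smul]; abel
  simp only [h3] at h2
  rw [h2, h1, finrank_euclideanSpace_fin, abs_of_pos (by positivity), smul_eq_mul, ← mul_assoc,
    mul_inv_cancel₀ (by positivity), one_mul]

lemma aux_cov' {n j : ℕ} (hj1 : 1 ≤ j) (hjn : j ≤ n) (f g : EuclideanSpace ℝ (Fin n) → ℝ)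
    (x : EuclideanSpace ℝ (Fin n)) {t : ℝ} (ht : 0 < t) :
    ∫ y, f y * g (x + t⁻¹ • (x - y)) * (t ^ (n + 1 - j))⁻¹ =
      t ^ (j - 1) * ∫ w, f ((1 + t) • x - t • w) * g w := by
  rw [integral_mul_const, aux_cov f g x ht]
  have : t ^ n = t ^ (j - 1) * t ^ (n + 1 - j) := by
    rw [← pow_add]; congr 1; omega
  rw [this]
  field_simp

lemma aux_int_s12 {n j : ℕ} (hj1 : 1 ≤ j) (hjn : j ≤ n) (f g : EuclideanSpace ℝ (Fin n) → ℝ)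
    (hf : Continuous f) (hfc : HasCompactSupport f) (hg : Continuous g)
    (hgc : HasCompactSupport g) (x : EuclideanSpace ℝ (Fin n)) :
    Integrable (fun p : EuclideanSpace ℝ (Fin n) × ℝ =>
      f p.1 * g (x + p.2⁻¹ • (x - p.1)) * (p.2 ^ (n + 1 - j))⁻¹)
      (volume.prod (volume.restrict (Ioo (0:ℝ) 1))) := by
  obtain ⟨M, hM⟩ := hfc.exists_bound_of_continuous hf
  have hM0 : 0 ≤ M := (norm_nonneg _).trans (hM 0)
  have hgi : Integrable g := hg.integrable_of_hasCompactSupport hgc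
  have hmeas : Measurable (fun p : EuclideanSpace ℝ (Fin n) × ℝ =>
      f p.1 * g (x + p.2⁻¹ • (x - p.1)) * (p.2 ^ (n + 1 - j))⁻¹) := by
    have := hf.measurable
    have := hg.measurable
    fun_prop
  rw [integrable_prod_iff' hmeas.aestronglyMeasurable]
  constructor
  · refine Eventually.of_forall fun t => ?_
    have key : Integrable (fun y => f y * g (x + t⁻¹ • (x - y))) := ?_
    · exact key.mul_const ((t ^ (n + 1 - j))⁻¹)
    refine Continuous.integrable_of_hasCompactSupport (by fun_prop) ?_
    exact hfc.mul_right
  · refine Integrable.mono' (g := fun _ => M * ∫ w, ‖g w‖) (integrable_const _) ?_ ?_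
    · exact hmeas.norm.stronglyMeasurable.integral_prod_left.aestronglyMeasurable
    · refine (ae_restrict_iff' measurableSet_Ioo).2 (Eventually.of_forall fun t ht => ?_)
      have h := aux_cov' hj1 hjn (fun y => ‖f y‖) (fun y => ‖g y‖) x ht.1
      have e : ∀ y, ‖f y * g (x + t⁻¹ • (x - y)) * (t ^ (n + 1 - j))⁻¹‖ =
          ‖f y‖ * ‖g (x + t⁻¹ • (x - y))‖ * (t ^ (n + 1 - j))⁻¹ := by
        intro y
        rw [norm_mul, norm_mul, Real.norm_of_nonneg (inv_nonneg.2 (pow_nonneg ht.1.le _))]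
      simp only [e]
      rw [h, norm_mul, Real.norm_of_nonneg (pow_nonneg ht.1.le _)]
      have h1 : ‖∫ w, ‖f ((1 + t) • x - t • w)‖ * ‖g w‖‖ ≤ ∫ w, M * ‖g w‖ := by
        refine norm_integral_le_of_norm_le (hgi.norm.const_mul M) (Eventually.of_forall fun w => ?_)
        rw [norm_mul, norm_norm, norm_norm]
        exact mul_le_mul_of_nonneg_right (hM _) (norm_nonneg _)
      rw [integral_const_mul] at h1
      calc _ ≤ 1 * ‖∫ w, ‖f ((1 + t) • x - t • w)‖ * ‖g w‖‖ :=
            mul_le_mul_of_nonneg_right (pow_le_one₀ ht.1.le ht.2.le) (norm_nonneg _)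
        _ ≤ _ := by rw [one_mul]; exact h1

lemma aux_H {n j : ℕ} (hj1 : 1 ≤ j) (hjn : j ≤ n) (f g : EuclideanSpace ℝ (Fin n) → ℝ)
    (hf : Continuous f) (hfc : HasCompactSupport f) (hg : Continuous g)
    (hgc : HasCompactSupport g) (x : EuclideanSpace ℝ (Fin n)) :
    IntegrableOn (fun t : ℝ => t ^ (j - 1) * ∫ w, f ((1 + t) • x - t • w) * g w) (Ioo 0 1) ∧
    (∫ y, ∫ t in Ioo (0:ℝ) 1, f y * g (x + t⁻¹ • (x - y)) * (t ^ (n + 1 - j))⁻¹) =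
      ∫ t in Ioo (0:ℝ) 1, t ^ (j - 1) * ∫ w, f ((1 + t) • x - t • w) * g w := by
  have h := aux_int_s12 hj1 hjn f g hf hfc hg hgc x
  constructor
  · refine (integrableOn_congr_fun (fun t ht => ?_) measurableSet_Ioo).1 h.integral_prod_right
    exact aux_cov' hj1 hjn f g x ht.1
  · rw [integral_integral_swap h]
    exact setIntegral_congr_fun measurableSet_Ioo fun t ht => aux_cov' hj1 hjn f g x ht.1

lemma aux_holder {E : Type*} [NormedAddCommGroup E] (S : E → ℝ) (M L : ℝ)
    (hM : ∀ x, |S x| ≤ M) (hL : ∀ x x', |S x - S x'| ≤ L * ‖x - x'‖) (hL0 : 0 ≤ L)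
    (α : ℝ) (h0 : 0 < α) (h1 : α < 1) (x x' : E) :
    |S x - S x'| ≤ (2 * M + L) * ‖x - x'‖ ^ α := by
  have hM0 : 0 ≤ M := (abs_nonneg _).trans (hM x)
  rcases le_total ‖x - x'‖ 1 with h | h
  · have h2 : ‖x - x'‖ ≤ ‖x - x'‖ ^ α := by
      simpa using Real.rpow_le_rpow_of_exponent_ge' (norm_nonneg _) h h0.le h1.le
    have := mul_le_mul_of_nonneg_left h2 hL0
    have h3 := hL x x'
    have : 0 ≤ ‖x - x'‖ ^ α := (norm_nonneg _).trans h2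
    nlinarith
  · have h2 : 1 ≤ ‖x - x'‖ ^ α := Real.one_le_rpow h h0.le
    have h3 : |S x - S x'| ≤ 2 * M := by
      have := abs_sub (S x) (S x'); linarith [hM x, hM x']
    nlinarith

/-- For `1 ≤ j ≤ n−1`, the function
`S_j1(x) = ∫ χ(y) K_j(x, x−y) dy` (an absolutely convergent integral) belongs to
`Λ̇_α(ℝⁿ)` for every `0 < α < 1`. -/
theorem Sj_one_in_homogeneous_lipschitz
    (n : ℕ) (hn : 2 ≤ n)
    (Ω B : Set (EuclideanSpace ℝ (Fin n)))
    (hΩo : IsOpen Ω) (hΩb : Bornology.IsBounded Ω)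
    (hBball : ∃ c r, 0 < r ∧ B = Metric.ball c r)
    (hBΩ : B ⊆ Ω)
    (hstar : ∀ x ∈ Ω, ∀ y ∈ B, segment ℝ x y ⊆ Ω)
    (Bt : Set (EuclideanSpace ℝ (Fin n)))
    (hBt : ∃ c r, 0 < r ∧ Bt = Metric.ball c r)
    (hΩBt : closure Ω ⊆ Bt)
    (d : ℝ) (hd : d = Metric.diam Bt)
    (χ : EuclideanSpace ℝ (Fin n) → ℝ)
    (hχ : ContDiff ℝ (⊤ : ℕ∞) χ) (hχc : HasCompactSupport χ)
    (hχsupp : tsupport χ ⊆ Bt) (hχ1 : ∀ x ∈ Ω, χ x = 1)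
    (ψ : EuclideanSpace ℝ (Fin n) → ℝ)
    (hψ : ContDiff ℝ (⊤ : ℕ∞) ψ) (hψc : HasCompactSupport ψ)
    (hψsupp : tsupport ψ ⊆ B) (hψint : ∫ x, ψ x = 0)
    (j : ℕ) (hj1 : 1 ≤ j) (hjn : j ≤ n - 1)
    (Kj : EuclideanSpace ℝ (Fin n) → EuclideanSpace ℝ (Fin n) → ℝ)
    (hKj : ∀ x z, Kj x z = (n - 1).choose j *
      ∫ t in Set.Ioo (0:ℝ) 1, χ x * ψ (x + t⁻¹ • z) * (t ^ (n + 1 - j))⁻¹)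
    (Sj1 : EuclideanSpace ℝ (Fin n) → ℝ)
    (hSj1 : ∀ x, Sj1 x = ∫ y, χ y * Kj x (x - y)) :
    (∀ x : EuclideanSpace ℝ (Fin n),
      Integrable (fun y : EuclideanSpace ℝ (Fin n) => χ y * Kj x (x - y))) ∧
    (∀ α : ℝ, 0 < α → α < 1 → ∃ C : ℝ,
      ∀ x x' : EuclideanSpace ℝ (Fin n), |Sj1 x - Sj1 x'| ≤ C * ‖x - x'‖ ^ α) := by
  have hjn' : j ≤ n := by omega
  have hχ' := hχ.continuous
  have hψ' := hψ.continuous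
  have hK : ∀ x y, χ y * Kj x (x - y) = ((n - 1).choose j * χ x) *
      ∫ t in Ioo (0:ℝ) 1, χ y * ψ (x + t⁻¹ • (x - y)) * (t ^ (n + 1 - j))⁻¹ := by
    intro x y
    rw [hKj]
    simp only [mul_assoc]
    rw [integral_const_mul, integral_const_mul]
    ring
  constructor
  · intro x
    simp only [hK]
    exact (aux_int_s12 hj1 hjn' χ ψ hχ' hχc hψ' hψc x).integral_prod_left.const_mul _
  intro α h0 h1
  set H : EuclideanSpace ℝ (Fin n) → ℝ := fun x =>
    ∫ t in Ioo (0:ℝ) 1, t ^ (j - 1) * ∫ w, χ ((1 + t) • x - t • w) * ψ w with hH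
  set c : ℝ := ((n - 1).choose j : ℝ) with hc
  have hc0 : 0 ≤ c := Nat.cast_nonneg _
  have hS : ∀ x, Sj1 x = c * χ x * H x := by
    intro x
    rw [hSj1]
    simp only [hK]
    rw [integral_const_mul, (aux_H hj1 hjn' χ ψ hχ' hχc hψ' hψc x).2]
  obtain ⟨M, hM⟩ := hχc.exists_bound_of_continuous hχ'
  have hM0 : 0 ≤ M := (norm_nonneg _).trans (hM 0)
  obtain ⟨L, hL⟩ := (hχ.of_le (by simp : (1 : WithTop ℕ∞) ≤ _)).lipschitzWith_of_hasCompactSupport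
    hχc (by simp)
  have hψi : Integrable ψ := hψ'.integrable_of_hasCompactSupport hψc
  set I : ℝ := ∫ w, ‖ψ w‖ with hI
  have hI0 : 0 ≤ I := integral_nonneg fun _ => norm_nonneg _
  have hin : ∀ (x : EuclideanSpace ℝ (Fin n)) (t : ℝ),
      Integrable (fun w => χ ((1 + t) • x - t • w) * ψ w) := by
    intro x t
    refine Continuous.integrable_of_hasCompactSupport (by fun_prop) ?_
    exact hψc.mul_left
  have hvol : (volume : Measure ℝ) (Ioo 0 1) < ⊤ := by simp
  have hHM : ∀ x, |H x| ≤ M * I := by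
    intro x
    have := norm_setIntegral_le_of_norm_le_const (C := M * I) (f := fun t : ℝ =>
      t ^ (j - 1) * ∫ w, χ ((1 + t) • x - t • w) * ψ w) hvol (fun t ht => ?_)
    · simpa using this
    have h1 : ‖∫ w, χ ((1 + t) • x - t • w) * ψ w‖ ≤ ∫ w, M * ‖ψ w‖ := by
      refine norm_integral_le_of_norm_le (hψi.norm.const_mul M) (Eventually.of_forall fun w => ?_)
      rw [norm_mul]
      exact mul_le_mul_of_nonneg_right (hM _) (norm_nonneg _)
    rw [integral_const_mul] at h1
    rw [norm_mul, Real.norm_of_nonneg (pow_nonneg ht.1.le _)]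
    calc _ ≤ 1 * ‖∫ w, χ ((1 + t) • x - t • w) * ψ w‖ :=
          mul_le_mul_of_nonneg_right (pow_le_one₀ ht.1.le ht.2.le) (norm_nonneg _)
      _ ≤ _ := by rw [one_mul]; exact h1
  have hHL : ∀ x x', |H x - H x'| ≤ (2 * L * I) * ‖x - x'‖ := by
    intro x x'
    rw [hH]
    simp only
    rw [← integral_sub (aux_H hj1 hjn' χ ψ hχ' hχc hψ' hψc x).1
      (aux_H hj1 hjn' χ ψ hχ' hχc hψ' hψc x').1]
    have := norm_setIntegral_le_of_norm_le_const (C := (2 * L * I) * ‖x - x'‖) (f := fun t : ℝ =>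
      t ^ (j - 1) * (∫ w, χ ((1 + t) • x - t • w) * ψ w) -
      t ^ (j - 1) * ∫ w, χ ((1 + t) • x' - t • w) * ψ w) hvol (fun t ht => ?_)
    · simpa using this
    rw [← mul_sub, ← integral_sub (hin x t) (hin x' t)]
    have h1 : ‖∫ w, (χ ((1 + t) • x - t • w) * ψ w - χ ((1 + t) • x' - t • w) * ψ w)‖ ≤
        ∫ w, (2 * L * ‖x - x'‖) * ‖ψ w‖ := by
      refine norm_integral_le_of_norm_le (hψi.norm.const_mul _) (Eventually.of_forall fun w => ?_)
      rw [← sub_mul, norm_mul]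
      refine mul_le_mul_of_nonneg_right ?_ (norm_nonneg _)
      have h2 := hL.dist_le_mul ((1 + t) • x - t • w) ((1 + t) • x' - t • w)
      rw [dist_eq_norm, dist_eq_norm] at h2
      refine h2.trans ?_
      have h3 : ((1 + t) • x - t • w) - ((1 + t) • x' - t • w) = (1 + t) • (x - x') := by module
      rw [h3, norm_smul, Real.norm_of_nonneg (by linarith [ht.1])]
      have h4 : (1 + t) * ‖x - x'‖ ≤ 2 * ‖x - x'‖ :=
        mul_le_mul_of_nonneg_right (by linarith [ht.2]) (norm_nonneg _)
      have := mul_le_mul_of_nonneg_left h4 L.coe_nonneg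
      linarith
    rw [integral_const_mul] at h1
    rw [norm_mul, Real.norm_of_nonneg (pow_nonneg ht.1.le _)]
    refine (mul_le_mul_of_nonneg_right (pow_le_one₀ ht.1.le ht.2.le) (norm_nonneg _)).trans ?_
    rw [one_mul]
    refine h1.trans (le_of_eq ?_)
    rw [hI]; ring
  refine ⟨2 * (c * M * (M * I)) + (c * (M * (2 * L * I) + L * (M * I))), fun x x' =>
    aux_holder Sj1 _ _ ?_ ?_ (by positivity) α h0 h1 x x'⟩
  · intro x
    rw [hS, abs_mul, abs_mul, abs_of_nonneg hc0]
    have := hM x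
    rw [Real.norm_eq_abs] at this
    exact mul_le_mul (mul_le_mul_of_nonneg_left this hc0) (hHM x) (abs_nonneg _) (by positivity)
  · intro x x'
    have e : Sj1 x - Sj1 x' = c * (χ x * (H x - H x') + (χ x - χ x') * H x') := by
      rw [hS, hS]; ring
    rw [e, abs_mul, abs_of_nonneg hc0, mul_assoc]
    refine mul_le_mul_of_nonneg_left ((abs_add_le _ _).trans ?_) hc0
    rw [abs_mul, abs_mul]
    have a1 := hM x
    rw [Real.norm_eq_abs] at a1
    have a2 := hL.dist_le_mul x x'
    rw [Real.dist_eq, dist_eq_norm] at a2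
    have b1 := mul_le_mul a1 (hHL x x') (abs_nonneg _) hM0
    have b2 := mul_le_mul a2 (hHM x') (abs_nonneg _) (by positivity)
    linarith
end

section
/- For every α with 0 < α < 1 there is a constant C (depending on α, n, Ω, χ, ψ) such that for every bounded continuous f : ℝⁿ → ℝ with ‖f‖_{Λ_α} < ∞ the following holds: for every x ∈ ℝⁿ the principal-value limit Tf(x) = lim_{ε→0⁺} ∫_{{y : |x−y|>ε}} H(x,y) f(y) dy exists, and ‖Tf‖_{Λ_α} ≤ C ‖f‖_{Λ_α}. -/
open MeasureTheory Metric Set Filter Topology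

/-- The inhomogeneous Hölder (Lipschitz-α) norm
`‖f‖_{Λ_α} = sup |f| + sup_{x ≠ y} |f(x) − f(y)|/|x−y|^α`. -/
noncomputable def lambdaNorm (n : ℕ) (α : ℝ) (f : EuclideanSpace ℝ (Fin n) → ℝ) : ℝ :=
  (⨆ x : EuclideanSpace ℝ (Fin n), |f x|) +
  ⨆ p : {p : EuclideanSpace ℝ (Fin n) × EuclideanSpace ℝ (Fin n) // p.1 ≠ p.2},
    |f p.1.1 - f p.1.2| / ‖p.1.1 - p.1.2‖ ^ α


abbrev EE (n : ℕ) := EuclideanSpace ℝ (Fin n)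

structure PsiOK (n : ℕ) (R P : ℝ) (ψ : EE n → ℝ) : Prop where
  R1 : 1 ≤ R
  P0 : 0 ≤ P
  cont : Continuous ψ
  bd : ∀ x, |ψ x| ≤ P
  lip : ∀ x y, |ψ x - ψ y| ≤ P * ‖x - y‖
  supp : ∀ x, ψ x ≠ 0 → ‖x‖ ≤ R
  int0 : ∫ x, ψ x = 0

structure GOK (n : ℕ) (α R M : ℝ) (g : EE n → ℝ) : Prop where
  M0 : 0 ≤ M
  cont : Continuous g
  bd : ∀ x, |g x| ≤ M
  hol : ∀ x y, |g x - g y| ≤ M * ‖x - y‖ ^ α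
  supp : ∀ x, g x ≠ 0 → ‖x‖ ≤ R

noncomputable def VV (n : ℕ) : ℝ := (volume : Measure (EE n)).real (ball 0 1)

lemma VV_nonneg (n : ℕ) : 0 ≤ VV n := measureReal_nonneg

noncomputable def kap (t : ℝ) : ℝ := if 2 < t then 1 else 0

noncomputable def NN (n : ℕ) (ψ g : EE n → ℝ) (x : EE n) (t : ℝ) : ℝ :=
  ∫ y, g y * ψ (y + t • (x - y))

noncomputable def Ph (n : ℕ) (ψ : EE n → ℝ) (x : EE n) (ρ : ℝ) : ℝ :=
  ∫ v in {v : EE n | ρ < ‖v‖}, ψ (x + v)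

lemma abs_setIntegral_le_ball {n : ℕ} (F : EE n → ℝ) (S : Set (EE n)) (x : EE n) (K ρ : ℝ)
    (hρ : 0 ≤ ρ) (hK : 0 ≤ K)
    (hb : ∀ y, F y ≠ 0 → |F y| ≤ K ∧ ‖x - y‖ ≤ ρ) :
    |∫ y in S, F y| ≤ K * (ρ ^ n * VV n) := by
  have hi : Integrable ((closedBall x ρ).indicator (fun _ : EE n => K)) volume := by
    rw [integrable_indicator_iff measurableSet_closedBall]
    exact integrableOn_const (measure_closedBall_lt_top).ne
  have h0 : ∀ y, 0 ≤ (closedBall x ρ).indicator (fun _ : EE n => K) y :=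
    fun y => indicator_nonneg (fun _ _ => hK) y
  have h1 : |∫ y in S, F y| ≤ ∫ y in S, (closedBall x ρ).indicator (fun _ : EE n => K) y := by
    rw [← Real.norm_eq_abs]
    refine norm_integral_le_of_norm_le hi.integrableOn (Eventually.of_forall fun y => ?_)
    by_cases hF : F y = 0
    · rw [hF, norm_zero]; exact h0 y
    · obtain ⟨h1, h2⟩ := hb y hF
      rw [indicator_of_mem, Real.norm_eq_abs]
      · exact h1
      · rw [mem_closedBall, dist_comm, dist_eq_norm]; exact h2
  refine h1.trans ((setIntegral_le_integral hi (Eventually.of_forall h0)).trans ?_)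
  rw [integral_indicator measurableSet_closedBall, setIntegral_const,
    Measure.addHaar_real_closedBall _ _ hρ]
  simp [VV, mul_comm]

lemma integrable_of_ball {n : ℕ} (F : EE n → ℝ) (hF : Continuous F) (x : EE n) (ρ : ℝ)
    (hb : ∀ y, F y ≠ 0 → ‖x - y‖ ≤ ρ) : Integrable F := by
  refine hF.integrable_of_hasCompactSupport
    (HasCompactSupport.intro (isCompact_closedBall x ρ) fun y hy => ?_)
  by_contra h
  exact hy (by rw [mem_closedBall, dist_comm, dist_eq_norm]; exact hb y h)

section
variable {n : ℕ} {α R P M : ℝ} {ψ g : EE n → ℝ}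

lemma supp_kernel (hψ : PsiOK n R P ψ) (hg : GOK n α R M g) {x y : EE n} (hx : ‖x‖ ≤ R) {t : ℝ}
    (ht : 1 < t) (h1 : g y - kap t * g x ≠ 0) (h2 : ψ (y + t • (x - y)) ≠ 0) :
    ‖x - y‖ ≤ 4 * R / t := by
  have hp := hψ.supp _ h2
  have hR := hψ.R1
  rw [le_div_iff₀ (by linarith)]
  by_cases h : 2 < t
  · have e : (t - 1) • (x - y) = (y + t • (x - y)) - x := by module
    have : (t - 1) * ‖x - y‖ ≤ R + R := by
      rw [← abs_of_pos (show 0 < t - 1 by linarith), ← Real.norm_eq_abs, ← norm_smul, e]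
      exact (norm_sub_le _ _).trans (add_le_add hp hx)
    nlinarith [norm_nonneg (x - y)]
  · simp only [kap, h, if_false, zero_mul, sub_zero] at h1
    have hy := hg.supp _ h1
    have e : t • (x - y) = (y + t • (x - y)) - y := by module
    have : t * ‖x - y‖ ≤ R + R := by
      rw [← abs_of_pos (show 0 < t by linarith), ← Real.norm_eq_abs, ← norm_smul, e]
      exact (norm_sub_le _ _).trans (add_le_add hp hy)
    nlinarith [norm_nonneg (x - y)]

lemma g_diff (hα : 0 < α) (hα1 : α < 1) (hg : GOK n α R M g) {x y : EE n} {t D : ℝ} (hD : 1 ≤ D)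
    (ht : 1 < t) (h : ‖x - y‖ ≤ D / t) :
    |g y - kap t * g x| ≤ (2 + D) * M * t ^ (-α) := by
  have hM := hg.M0
  have ht0 : 0 < t := by linarith
  have htp : 0 < t ^ (-α) := Real.rpow_pos_of_pos ht0 _
  by_cases h2 : 2 < t
  · simp only [kap, h2, if_true, one_mul]
    have h3 : ‖y - x‖ ^ α ≤ D * t ^ (-α) := by
      rw [norm_sub_rev]
      calc ‖x - y‖ ^ α ≤ (D / t) ^ α := Real.rpow_le_rpow (norm_nonneg _) h hα.le
        _ = D ^ α * t ^ (-α) := by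
          rw [Real.div_rpow (by linarith) ht0.le, Real.rpow_neg ht0.le]; rfl
        _ ≤ D * t ^ (-α) := by
          gcongr; exact Real.rpow_le_self_of_one_le hD hα1.le
    have h4 := hg.hol y x
    have := mul_le_mul_of_nonneg_left h3 hM
    nlinarith [mul_nonneg hM htp.le]
  · simp only [kap, h2, if_false, zero_mul, sub_zero]
    have h3 : 1 ≤ 2 * t ^ (-α) := by
      rw [Real.rpow_neg ht0.le]
      have : t ^ α ≤ 2 := (Real.rpow_le_self_of_one_le ht.le hα1.le).trans (by linarith)
      have hp : 0 < t ^ α := Real.rpow_pos_of_pos ht0 _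
      rw [← div_eq_mul_inv, le_div_iff₀ hp]; linarith
    have h4 := hg.bd y
    have := mul_le_mul_of_nonneg_left h3 hM
    have h5 : 0 ≤ D * M * t ^ (-α) := by positivity
    nlinarith

lemma pow_aux (hn : 1 ≤ n) {t D : ℝ} (ht : 1 < t) :
    t ^ (n - 1) * ((D / t) ^ n) = D ^ n * t⁻¹ := by
  obtain ⟨m, rfl⟩ : ∃ m, n = m + 1 := ⟨n - 1, by omega⟩
  have : t ≠ 0 := by positivity
  simp only [Nat.add_sub_cancel]
  rw [div_pow]
  field_simp
  ring

lemma J_bound (hn : 1 ≤ n) (hα : 0 < α) (hα1 : α < 1) (hψ : PsiOK n R P ψ) (hg : GOK n α R M g)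
    {x : EE n} (hx : ‖x‖ ≤ R) {t : ℝ} (ht : 1 < t) (S : Set (EE n)) :
    |t ^ (n - 1) * ∫ y in S, (g y - kap t * g x) * ψ (y + t • (x - y))| ≤
      ((2 + 4 * R) * P * (4 * R) ^ n * VV n * M) * t ^ (-1 - α) := by
  have hR := hψ.R1
  have hM := hg.M0
  have hP := hψ.P0
  have ht0 : 0 < t := by linarith
  have htp : 0 < t ^ (-α) := Real.rpow_pos_of_pos ht0 _
  have h := abs_setIntegral_le_ball (fun y => (g y - kap t * g x) * ψ (y + t • (x - y))) S x
    ((2 + 4 * R) * M * t ^ (-α) * P) (4 * R / t) (by positivity) (by positivity) (by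
      intro y hy
      have hs := supp_kernel hψ hg hx ht (left_ne_zero_of_mul hy) (right_ne_zero_of_mul hy)
      refine ⟨?_, hs⟩
      rw [abs_mul]
      exact mul_le_mul (g_diff hα hα1 hg (by linarith) ht hs) (hψ.bd _) (abs_nonneg _)
        (by positivity))
  rw [abs_mul, abs_of_pos (show 0 < t ^ (n - 1) by positivity)]
  calc _ ≤ t ^ (n - 1) * _ := mul_le_mul_of_nonneg_left h (by positivity)
    _ = ((2 + 4 * R) * M * t ^ (-α) * P) * VV n * (t ^ (n - 1) * ((4 * R / t) ^ n)) := by ring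
    _ = _ := by
      rw [pow_aux hn ht, Real.rpow_sub ht0, Real.rpow_neg_one, Real.rpow_neg ht0.le]; ring

lemma Ph_scale (ψ : EE n → ℝ) (x : EE n) {r : ℝ} (hr : 0 < r) (ε : ℝ) :
    ∫ y in {y : EE n | ε < ‖x - y‖}, ψ (x + r • (x - y)) = (r ^ n)⁻¹ * Ph n ψ x (r * ε) := by
  have m1 : MeasurableSet {y : EE n | ε < ‖x - y‖} :=
    measurableSet_lt measurable_const (by fun_prop)
  have m2 : MeasurableSet {v : EE n | r * ε < ‖v‖} :=
    measurableSet_lt measurable_const (by fun_prop)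
  rw [Ph, ← integral_indicator m1, ← integral_indicator m2]
  set k : EE n → ℝ := {v : EE n | r * ε < ‖v‖}.indicator fun v => ψ (x + v) with hk
  have e : ∀ y, {y : EE n | ε < ‖x - y‖}.indicator (fun y => ψ (x + r • (x - y))) y =
      k (r • (x - y)) := by
    intro y
    simp only [hk, indicator, mem_ofPred_eq, norm_smul, Real.norm_eq_abs, abs_of_pos hr,
      mul_lt_mul_iff_right₀ hr]
  simp_rw [e]
  rw [integral_sub_left_eq_self (fun z => k (r • z)) volume x, Measure.integral_comp_smul]
  simp [abs_of_pos hr]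

lemma int_psi_zero (hψ : PsiOK n R P ψ) (x : EE n) {t : ℝ} (ht : 1 < t) :
    ∫ y, ψ (y + t • (x - y)) = 0 := by
  have h := Ph_scale ψ x (show 0 < t - 1 by linarith) (-1)
  have e1 : {y : EE n | -1 < ‖x - y‖} = univ := by
    ext y; simp only [mem_ofPred_eq, mem_univ, iff_true]; linarith [norm_nonneg (x - y)]
  have e2 : {y : EE n | (t - 1) * (-1) < ‖y‖} = univ := by
    ext y; simp only [mem_ofPred_eq, mem_univ, iff_true]; nlinarith [norm_nonneg y]
  rw [Ph, e1, e2] at h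
  simp only [Measure.restrict_univ] at h
  rw [integral_add_left_eq_self (fun v => ψ v) x, hψ.int0, mul_zero] at h
  rw [← h]
  congr 1; ext y; congr 1; module

lemma integrable_psi (hψ : PsiOK n R P ψ) (x : EE n) {t : ℝ} (ht : 1 < t) :
    Integrable fun y => ψ (y + t • (x - y)) := by
  have ht1 : 0 < t - 1 := by linarith
  refine integrable_of_ball _ (hψ.cont.comp (by fun_prop)) x ((R + ‖x‖) / (t - 1)) fun y hy => ?_
  have hp := hψ.supp _ hy
  rw [le_div_iff₀ ht1]
  have e : (t - 1) • (x - y) = (y + t • (x - y)) - x := by module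
  rw [mul_comm, ← abs_of_pos ht1, ← Real.norm_eq_abs, ← norm_smul, e]
  exact (norm_sub_le _ _).trans (by linarith)

lemma integrable_g_psi (hψ : PsiOK n R P ψ) (hg : GOK n α R M g) (x : EE n) (t : ℝ) :
    Integrable fun y => g y * ψ (y + t • (x - y)) := by
  have := hψ.cont
  have := hg.cont
  refine integrable_of_ball _ (by fun_prop) 0 R fun y hy => ?_
  have hp := hg.supp _ (left_ne_zero_of_mul hy)
  simpa using hp

lemma NN_eq (hψ : PsiOK n R P ψ) (hg : GOK n α R M g) (x : EE n) {t : ℝ} (ht : 1 < t) (c : ℝ) :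
    NN n ψ g x t = ∫ y, (g y - c) * ψ (y + t • (x - y)) := by
  simp_rw [sub_mul]
  rw [integral_sub (integrable_g_psi hψ hg x t) ((integrable_psi hψ x ht).const_mul _),
    integral_const_mul, int_psi_zero hψ x ht, mul_zero, sub_zero, NN]

lemma NN_bound (hn : 1 ≤ n) (hα : 0 < α) (hα1 : α < 1) (hψ : PsiOK n R P ψ) (hg : GOK n α R M g)
    {x : EE n} (hx : ‖x‖ ≤ R) {t : ℝ} (ht : 1 < t) :
    |t ^ (n - 1) * NN n ψ g x t| ≤
      ((2 + 4 * R) * P * (4 * R) ^ n * VV n * M) * t ^ (-1 - α) := by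
  have := J_bound hn hα hα1 hψ hg hx ht univ
  rwa [Measure.restrict_univ, ← NN_eq hψ hg x ht] at this

lemma NN_diff (hn : 1 ≤ n) (hα : 0 < α) (hα1 : α < 1) (hψ : PsiOK n R P ψ) (hg : GOK n α R M g)
    {x x' : EE n} (hx : ‖x‖ ≤ R) (hx' : ‖x'‖ ≤ R) {t : ℝ} (ht : 1 < t) (hh : t * ‖x - x'‖ ≤ 1) :
    |t ^ (n - 1) * NN n ψ g x t - t ^ (n - 1) * NN n ψ g x' t| ≤
      ((2 + (4 * R + 1)) * P * (4 * R + 1) ^ n * VV n * M) * ‖x - x'‖ * t ^ (-α) := by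
  have hR := hψ.R1
  have hM := hg.M0
  have hP := hψ.P0
  have ht0 : 0 < t := by linarith
  have htp : 0 < t ^ (-α) := Real.rpow_pos_of_pos ht0 _
  have key : NN n ψ g x t - NN n ψ g x' t = ∫ y in univ, (g y - kap t * g x) *
      (ψ (y + t • (x - y)) - ψ (y + t • (x' - y))) := by
    rw [NN_eq hψ hg x ht (kap t * g x), NN_eq hψ hg x' ht (kap t * g x), ← integral_sub]
    · simp only [Measure.restrict_univ, mul_sub]
    · simp_rw [sub_mul]
      exact (integrable_g_psi hψ hg x t).sub ((integrable_psi hψ x ht).const_mul _)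
    · simp_rw [sub_mul]
      exact (integrable_g_psi hψ hg x' t).sub ((integrable_psi hψ x' ht).const_mul _)
  have hdiv : 4 * R / t ≤ (4 * R + 1) / t := by gcongr; linarith
  have h := abs_setIntegral_le_ball (fun y => (g y - kap t * g x) *
      (ψ (y + t • (x - y)) - ψ (y + t • (x' - y)))) univ x
    ((2 + (4 * R + 1)) * M * t ^ (-α) * (P * (t * ‖x - x'‖))) ((4 * R + 1) / t)
      (by positivity) (by positivity) (by
      intro y hy
      have hs : ‖x - y‖ ≤ (4 * R + 1) / t := by
        by_cases h1 : ψ (y + t • (x - y)) = 0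
        · have h2 : ψ (y + t • (x' - y)) ≠ 0 := by
            intro h2; exact right_ne_zero_of_mul hy (by rw [h1, h2, sub_zero])
          have h3 : ‖x' - y‖ ≤ 4 * R / t := by
            by_cases hk : g y - kap t * g x' = 0
            ·
              have hp := hψ.supp _ h2
              rw [le_div_iff₀ ht0]
              by_cases h : 2 < t
              · have e : (t - 1) • (x' - y) = (y + t • (x' - y)) - x' := by module
                have : (t - 1) * ‖x' - y‖ ≤ R + R := by
                  rw [← abs_of_pos (show 0 < t - 1 by linarith), ← Real.norm_eq_abs,
                    ← norm_smul, e]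
                  exact (norm_sub_le _ _).trans (add_le_add hp hx')
                nlinarith [norm_nonneg (x' - y)]
              · exfalso
                have h0 := left_ne_zero_of_mul hy
                simp only [kap, h, if_false, zero_mul, sub_zero] at hk h0
                exact h0 hk
            · exact supp_kernel hψ hg hx' ht hk h2
          rw [le_div_iff₀ ht0] at h3 ⊢
          have h4 : ‖x - y‖ ≤ ‖x - x'‖ + ‖x' - y‖ := by
            simpa using norm_add_le (x - x') (x' - y)
          nlinarith
        · exact (supp_kernel hψ hg hx ht (left_ne_zero_of_mul hy) h1).trans hdiv
      refine ⟨?_, hs⟩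
      rw [abs_mul]
      refine mul_le_mul (g_diff hα hα1 hg (by linarith) ht hs) ?_ (abs_nonneg _)
        (by positivity)
      refine (hψ.lip _ _).trans_eq ?_
      have e : y + t • (x - y) - (y + t • (x' - y)) = t • (x - x') := by module
      rw [e, norm_smul, Real.norm_eq_abs, abs_of_pos ht0])
  rw [← mul_sub, abs_mul, abs_of_pos (show 0 < t ^ (n - 1) by positivity), key]
  calc _ ≤ t ^ (n - 1) * _ := mul_le_mul_of_nonneg_left h (by positivity)
    _ = ((2 + (4 * R + 1)) * M * t ^ (-α) * (P * (t * ‖x - x'‖))) * VV n *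
          (t ^ (n - 1) * (((4 * R + 1) / t) ^ n)) := by ring
    _ = _ := by
      rw [pow_aux hn ht]; field_simp
end
section
variable {n : ℕ} {α R P M : ℝ} {ψ g : EE n → ℝ}

noncomputable def II (n : ℕ) (ψ g : EE n → ℝ) (x : EE n) : ℝ :=
  ∫ t in Ioi (1:ℝ), t ^ (n - 1) * NN n ψ g x t

noncomputable def cc (n : ℕ) (ψ : EE n → ℝ) (x : EE n) : ℝ :=
  ∫ ρ in Ioi (0:ℝ), Ph n ψ x ρ / ρ

lemma NN_meas (hψ : Continuous ψ) (hg : Continuous g) (x : EE n) :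
    StronglyMeasurable fun t => NN n ψ g x t := by
  have : StronglyMeasurable fun p : ℝ × EE n => g p.2 * ψ (p.2 + p.1 • (x - p.2)) :=
    Continuous.stronglyMeasurable (by fun_prop)
  exact this.integral_prod_right'

lemma II_integrable (hn : 1 ≤ n) (hα : 0 < α) (hα1 : α < 1) (hψ : PsiOK n R P ψ)
    (hg : GOK n α R M g) {x : EE n} (hx : ‖x‖ ≤ R) :
    IntegrableOn (fun t => t ^ (n - 1) * NN n ψ g x t) (Ioi 1) := by
  have hb := (integrableOn_Ioi_rpow_of_lt (show -1 - α < -1 by linarith) one_pos).const_mul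
    ((2 + 4 * R) * P * (4 * R) ^ n * VV n * M)
  refine Integrable.mono' hb ?_ ?_
  · have h1 : StronglyMeasurable fun t : ℝ => t ^ (n - 1) :=
      Continuous.stronglyMeasurable (by fun_prop)
    exact (h1.mul (NN_meas hψ.cont hg.cont x)).aestronglyMeasurable
  · refine (ae_restrict_iff' measurableSet_Ioi).2 (Eventually.of_forall fun t ht => ?_)
    exact NN_bound hn hα hα1 hψ hg hx ht

lemma II_bound (hn : 1 ≤ n) (hα : 0 < α) (hα1 : α < 1) (hψ : PsiOK n R P ψ)
    (hg : GOK n α R M g) {x : EE n} (hx : ‖x‖ ≤ R) :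
    |II n ψ g x| ≤ ((2 + 4 * R) * P * (4 * R) ^ n * VV n * M) * α⁻¹ := by
  have hb := (integrableOn_Ioi_rpow_of_lt (show -1 - α < -1 by linarith) one_pos).const_mul
    ((2 + 4 * R) * P * (4 * R) ^ n * VV n * M)
  have : ‖II n ψ g x‖ ≤ _ := norm_integral_le_of_norm_le hb
    ((ae_restrict_iff' measurableSet_Ioi).2 (Eventually.of_forall fun t ht =>
      NN_bound hn hα hα1 hψ hg hx ht))
  rw [integral_const_mul, integral_Ioi_rpow_of_lt (by linarith) one_pos] at this
  rw [Real.norm_eq_abs] at this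
  refine this.trans_eq ?_
  rw [Real.one_rpow]
  congr 1
  rw [show -1 - α + 1 = -α by ring, neg_div_neg_eq, one_div]

lemma II_diff (hn : 1 ≤ n) (hα : 0 < α) (hα1 : α < 1) (hψ : PsiOK n R P ψ)
    (hg : GOK n α R M g) {x x' : EE n} (hx : ‖x‖ ≤ R) (hx' : ‖x'‖ ≤ R)
    (h0 : 0 < ‖x - x'‖) (h1 : ‖x - x'‖ ≤ 1) :
    |II n ψ g x - II n ψ g x'| ≤
      (((2 + (4 * R + 1)) * P * (4 * R + 1) ^ n * VV n) * (1 - α)⁻¹ +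
        2 * ((2 + 4 * R) * P * (4 * R) ^ n * VV n) * α⁻¹) * M * ‖x - x'‖ ^ α := by
  have hR := hψ.R1
  have hM := hg.M0
  have hP := hψ.P0
  have hV := VV_nonneg n
  set h := ‖x - x'‖ with hh
  set C1 := (2 + (4 * R + 1)) * P * (4 * R + 1) ^ n * VV n with hC1
  set C2 := (2 + 4 * R) * P * (4 * R) ^ n * VV n with hC2
  have hC1p : 0 ≤ C1 := by positivity
  have hC2p : 0 ≤ C2 := by positivity
  have i1 := II_integrable hn hα hα1 hψ hg hx
  have i2 := II_integrable hn hα hα1 hψ hg hx'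
  have h1' : 1 ≤ h⁻¹ := (one_le_inv₀ h0).2 h1
  rw [II, II, ← integral_sub i1 i2]
  have hu : Ioi (1:ℝ) = Ioc 1 h⁻¹ ∪ Ioi h⁻¹ := (Ioc_union_Ioi_eq_Ioi h1').symm
  have i3 : IntegrableOn (fun t => t ^ (n - 1) * NN n ψ g x t - t ^ (n - 1) * NN n ψ g x' t)
    (Ioi 1) := i1.sub i2
  rw [hu, setIntegral_union (Ioc_disjoint_Ioi le_rfl) measurableSet_Ioi
    (i3.mono_set Ioc_subset_Ioi_self) (i3.mono_set (Ioi_subset_Ioi h1'))]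
  have ii : IntervalIntegrable (fun t : ℝ => t ^ (-α)) volume 1 h⁻¹ :=
    intervalIntegral.intervalIntegrable_rpow' (by linarith)
  have b1 : ‖∫ t in Ioc 1 h⁻¹, (t ^ (n - 1) * NN n ψ g x t - t ^ (n - 1) * NN n ψ g x' t)‖ ≤
      ∫ t in Ioc 1 h⁻¹, C1 * M * h * t ^ (-α) := by
    refine norm_integral_le_of_norm_le (((intervalIntegrable_iff_integrableOn_Ioc_of_le h1').1
      ii).const_mul _) ((ae_restrict_iff' measurableSet_Ioc).2 (Eventually.of_forall fun t ht => ?_))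
    refine NN_diff hn hα hα1 hψ hg hx hx' ht.1 ?_
    calc t * h ≤ h⁻¹ * h := by gcongr; exact ht.2
      _ = 1 := inv_mul_cancel₀ h0.ne'
  have b2 : ‖∫ t in Ioi h⁻¹, (t ^ (n - 1) * NN n ψ g x t - t ^ (n - 1) * NN n ψ g x' t)‖ ≤
      ∫ t in Ioi h⁻¹, 2 * (C2 * M) * t ^ (-1 - α) := by
    refine norm_integral_le_of_norm_le ((integrableOn_Ioi_rpow_of_lt
      (show -1 - α < -1 by linarith) (by positivity)).const_mul _)
      ((ae_restrict_iff' measurableSet_Ioi).2 (Eventually.of_forall fun t ht => ?_))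
    have ht1 : 1 < t := lt_of_le_of_lt h1' ht
    have e1 := NN_bound hn hα hα1 hψ hg hx ht1
    have e2 := NN_bound hn hα hα1 hψ hg hx' ht1
    rw [Real.norm_eq_abs]
    refine (abs_sub _ _).trans ?_
    rw [← hC2] at e1 e2
    linarith
  rw [integral_const_mul, ← intervalIntegral.integral_of_le (f := fun t : ℝ => t ^ (-α)) h1',
    integral_rpow (Or.inl (by linarith))] at b1
  rw [integral_const_mul, integral_Ioi_rpow_of_lt (by linarith) (by positivity)] at b2
  rw [← Real.norm_eq_abs]
  refine (norm_add_le _ _).trans ((add_le_add b1 b2).trans ?_)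
  have hα2 : 0 < 1 - α := by linarith
  have e1 : h⁻¹ ^ (-α + 1) = h ^ α * h⁻¹ := by
    rw [Real.rpow_add (by positivity), Real.rpow_one, Real.rpow_neg (by positivity),
      Real.inv_rpow h0.le, inv_inv]
  have e2 : h⁻¹ ^ (-1 - α + 1) = h ^ α := by
    rw [show -1 - α + 1 = -α by ring, Real.rpow_neg (by positivity),
      Real.inv_rpow h0.le, inv_inv]
  rw [e1, e2, Real.one_rpow]
  have e3 : C1 * M * h * ((h ^ α * h⁻¹ - 1) / (-α + 1)) ≤ C1 * (1 - α)⁻¹ * M * h ^ α := by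
    rw [show -α + 1 = 1 - α by ring, div_eq_mul_inv]
    have : C1 * M * h * ((h ^ α * h⁻¹ - 1) * (1 - α)⁻¹) =
      C1 * (1 - α)⁻¹ * M * (h ^ α * (h * h⁻¹) - h) := by ring
    rw [this, mul_inv_cancel₀ h0.ne']
    gcongr
    linarith
  have e4 : 2 * (C2 * M) * (-h ^ α / (-1 - α + 1)) = 2 * C2 * α⁻¹ * M * h ^ α := by
    rw [show -1 - α + 1 = -α by ring, neg_div_neg_eq, div_eq_mul_inv]; ring
  rw [e4]
  linarith

lemma Ph_eq (hψ : PsiOK n R P ψ) (x : EE n) (ρ : ℝ) :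
    Ph n ψ x ρ = - ∫ v in {v : EE n | ‖v‖ ≤ ρ}, ψ (x + v) := by
  have hi : Integrable fun v => ψ (x + v) := by
    have := hψ.cont
    refine integrable_of_ball _ (by fun_prop) 0 (R + ‖x‖) fun y hy => ?_
    have := hψ.supp _ hy
    have e : y = (x + y) - x := by abel
    rw [zero_sub, norm_neg, e]
    exact (norm_sub_le _ _).trans (by linarith)
  have m : MeasurableSet {v : EE n | ‖v‖ ≤ ρ} := measurableSet_le (by fun_prop) measurable_const
  have e : {v : EE n | ρ < ‖v‖} = {v : EE n | ‖v‖ ≤ ρ}ᶜ := by ext; simp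
  have := integral_add_compl m hi
  rw [integral_add_left_eq_self (μ := volume) (fun v => ψ v) x, hψ.int0] at this
  rw [Ph, e]; linarith

lemma Ph_zero (hψ : PsiOK n R P ψ) {x : EE n} (hx : ‖x‖ ≤ R) {ρ : ℝ} (hρ : 2 * R < ρ) :
    Ph n ψ x ρ = 0 := by
  rw [Ph]
  refine setIntegral_eq_zero_of_forall_eq_zero fun v hv => ?_
  by_contra h
  have := hψ.supp _ h
  have e : v = (x + v) - x := by abel
  have h2 : ‖v‖ ≤ ‖x + v‖ + ‖x‖ := by
    conv_lhs => rw [e]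
    exact norm_sub_le _ _
  simp only [mem_ofPred_eq] at hv
  linarith

lemma Ph_div_bound (hn : 1 ≤ n) (hψ : PsiOK n R P ψ) {x : EE n} (hx : ‖x‖ ≤ R) {ρ : ℝ}
    (hρ : 0 < ρ) :
    |Ph n ψ x ρ / ρ| ≤ (Ioc 0 (2 * R)).indicator (fun _ => P * (2 * R) ^ (n - 1) * VV n) ρ := by
  have hV := VV_nonneg n
  have hP := hψ.P0
  by_cases h : ρ ≤ 2 * R
  · have hmem : ρ ∈ Ioc 0 (2 * R) := mem_Ioc.2 ⟨hρ, h⟩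
    rw [indicator_of_mem hmem, abs_div, abs_of_pos hρ, div_le_iff₀ hρ,
      Ph_eq hψ, abs_neg]
    have m : MeasurableSet {v : EE n | ‖v‖ ≤ ρ} := measurableSet_le (by fun_prop) measurable_const
    rw [← integral_indicator m, ← setIntegral_univ]
    have := abs_setIntegral_le_ball ({v : EE n | ‖v‖ ≤ ρ}.indicator fun v => ψ (x + v)) univ 0 P ρ
      hρ.le hP (by
        intro y hy
        have hy' := mem_of_indicator_ne_zero hy
        rw [indicator_of_mem hy']
        exact ⟨hψ.bd _, by simpa using hy'⟩)
    refine this.trans ?_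
    obtain ⟨k, rfl⟩ : ∃ k, n = k + 1 := ⟨n - 1, by omega⟩
    simp only [Nat.add_sub_cancel]
    have : ρ ^ k ≤ (2 * R) ^ k := by gcongr
    calc P * (ρ ^ (k + 1) * VV (k + 1)) = P * ρ ^ k * VV (k + 1) * ρ := by ring
      _ ≤ _ := by gcongr
  · rw [Ph_zero hψ hx (not_le.1 h), zero_div, abs_zero]
    exact indicator_nonneg (fun _ _ => by have := hψ.R1; positivity) _

lemma Ph_div_diff (hn : 1 ≤ n) (hψ : PsiOK n R P ψ) {x x' : EE n} (hx : ‖x‖ ≤ R) (hx' : ‖x'‖ ≤ R)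
    {ρ : ℝ} (hρ : 0 < ρ) :
    |Ph n ψ x ρ / ρ - Ph n ψ x' ρ / ρ| ≤
      (Ioc 0 (2 * R)).indicator (fun _ => P * (2 * R) ^ (n - 1) * VV n * ‖x - x'‖) ρ := by
  have hV := VV_nonneg n
  have hP := hψ.P0
  have hc := hψ.cont
  by_cases h : ρ ≤ 2 * R
  · have hmem : ρ ∈ Ioc 0 (2 * R) := mem_Ioc.2 ⟨hρ, h⟩
    rw [indicator_of_mem hmem, ← sub_div, abs_div, abs_of_pos hρ,
      div_le_iff₀ hρ, Ph_eq hψ, Ph_eq hψ, neg_sub_neg]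
    have m : MeasurableSet {v : EE n | ‖v‖ ≤ ρ} := measurableSet_le (by fun_prop) measurable_const
    have hcomp : {v : EE n | ‖v‖ ≤ ρ} = closedBall 0 ρ := by ext; simp
    have hint : ∀ z : EE n, IntegrableOn (fun v => ψ (z + v)) {v : EE n | ‖v‖ ≤ ρ} := by
      intro z
      rw [hcomp]
      exact (Continuous.continuousOn (by fun_prop)).integrableOn_compact (isCompact_closedBall _ _)
    rw [← integral_sub (hint _) (hint _), ← integral_indicator m, ← setIntegral_univ]
    have := abs_setIntegral_le_ball ({v : EE n | ‖v‖ ≤ ρ}.indicator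
      fun v => ψ (x' + v) - ψ (x + v)) univ 0 (P * ‖x - x'‖) ρ
      hρ.le (by positivity) (by
        intro y hy
        have hy' := mem_of_indicator_ne_zero hy
        rw [indicator_of_mem hy']
        refine ⟨(hψ.lip _ _).trans_eq ?_, by simpa using hy'⟩
        rw [add_sub_add_right_eq_sub, norm_sub_rev])
    refine this.trans ?_
    obtain ⟨k, rfl⟩ : ∃ k, n = k + 1 := ⟨n - 1, by omega⟩
    simp only [Nat.add_sub_cancel]
    have : ρ ^ k ≤ (2 * R) ^ k := by gcongr
    calc P * ‖x - x'‖ * (ρ ^ (k + 1) * VV (k + 1))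
        = P * ρ ^ k * VV (k + 1) * ‖x - x'‖ * ρ := by ring
      _ ≤ _ := by gcongr
  · rw [Ph_zero hψ hx (not_le.1 h), Ph_zero hψ hx' (not_le.1 h), zero_div, sub_zero, abs_zero]
    exact indicator_nonneg (fun _ _ => by have := hψ.R1; positivity) _

lemma Ph_meas (hψ : Continuous ψ) (x : EE n) : StronglyMeasurable fun ρ => Ph n ψ x ρ := by
  have e : (fun ρ => Ph n ψ x ρ) = fun ρ => ∫ v, {p : ℝ × EE n | p.1 < ‖p.2‖}.indicator
      (fun p => ψ (x + p.2)) (ρ, v) := by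
    ext ρ
    rw [Ph, ← integral_indicator (measurableSet_lt measurable_const (by fun_prop))]
    rfl
  rw [e]
  have : StronglyMeasurable ({p : ℝ × EE n | p.1 < ‖p.2‖}.indicator
      (fun p : ℝ × EE n => ψ (x + p.2))) := by
    refine StronglyMeasurable.indicator (Continuous.stronglyMeasurable (by fun_prop)) ?_
    exact measurableSet_lt (by fun_prop) (by fun_prop)
  exact this.integral_prod_right'

lemma ind_integrable (a C : ℝ) :
    Integrable ((Ioc 0 a).indicator (fun _ : ℝ => C)) (volume.restrict (Ioi 0)) := by
  apply Integrable.integrableOn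
  rw [integrable_indicator_iff measurableSet_Ioc]
  exact integrableOn_const (by simp)

lemma ind_integral {a : ℝ} (ha : 0 ≤ a) (C : ℝ) :
    ∫ ρ in Ioi (0:ℝ), (Ioc 0 a).indicator (fun _ : ℝ => C) ρ = a * C := by
  rw [setIntegral_indicator measurableSet_Ioc, inter_eq_self_of_subset_right Ioc_subset_Ioi_self,
    setIntegral_const]
  simp [ha]

lemma cc_integrable (hn : 1 ≤ n) (hψ : PsiOK n R P ψ) {x : EE n} (hx : ‖x‖ ≤ R) :
    IntegrableOn (fun ρ => Ph n ψ x ρ / ρ) (Ioi 0) := by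
  refine Integrable.mono' (ind_integrable _ _) ?_ ((ae_restrict_iff' measurableSet_Ioi).2
    (Eventually.of_forall fun ρ hρ => Ph_div_bound hn hψ hx hρ))
  exact ((Ph_meas hψ.cont x).measurable.div measurable_id).aestronglyMeasurable

lemma cc_bound (hn : 1 ≤ n) (hψ : PsiOK n R P ψ) {x : EE n} (hx : ‖x‖ ≤ R) :
    |cc n ψ x| ≤ 2 * R * (P * (2 * R) ^ (n - 1) * VV n) := by
  have hR := hψ.R1
  rw [← ind_integral (by linarith), cc, ← Real.norm_eq_abs]
  exact norm_integral_le_of_norm_le (ind_integrable _ _) ((ae_restrict_iff' measurableSet_Ioi).2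
    (Eventually.of_forall fun ρ hρ => Ph_div_bound hn hψ hx hρ))

lemma cc_diff (hn : 1 ≤ n) (hψ : PsiOK n R P ψ) {x x' : EE n} (hx : ‖x‖ ≤ R) (hx' : ‖x'‖ ≤ R) :
    |cc n ψ x - cc n ψ x'| ≤ 2 * R * (P * (2 * R) ^ (n - 1) * VV n * ‖x - x'‖) := by
  have hR := hψ.R1
  rw [← ind_integral (by linarith), cc, cc, ← Real.norm_eq_abs,
    ← integral_sub (cc_integrable hn hψ hx) (cc_integrable hn hψ hx')]
  exact norm_integral_le_of_norm_le (ind_integrable _ _) ((ae_restrict_iff' measurableSet_Ioi).2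
    (Eventually.of_forall fun ρ hρ => Ph_div_diff hn hψ hx hx' hρ))
end
section
variable {n : ℕ} {α R P M : ℝ} {ψ g : EE n → ℝ}

lemma ceps_eq (hn : 1 ≤ n) (x : EE n) {ε : ℝ} (hε : 0 < ε) :
    ∫ t in Ioi (1:ℝ), kap t * t ^ (n - 1) * (((t - 1) ^ n)⁻¹ * Ph n ψ x ((t - 1) * ε)) =
    ∫ ρ in Ioi (0:ℝ), (Ioi ε).indicator (fun ρ => ((ε + ρ) / ρ) ^ (n - 1) * (Ph n ψ x ρ / ρ)) ρ := by
  have him : (fun ρ : ℝ => 1 + ε⁻¹ * ρ) '' Ioi 0 = Ioi 1 := by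
    ext t
    simp only [mem_image, mem_Ioi]
    constructor
    · rintro ⟨ρ, hρ, rfl⟩
      have : 0 < ε⁻¹ * ρ := by positivity
      linarith
    · intro ht
      refine ⟨ε * (t - 1), mul_pos hε (by linarith), ?_⟩
      rw [inv_mul_cancel_left₀ hε.ne']; ring
  rw [← him, integral_image_eq_integral_abs_deriv_smul (f' := fun _ => ε⁻¹) measurableSet_Ioi]
  · refine setIntegral_congr_fun measurableSet_Ioi fun ρ hρ => ?_
    have hρ0 : 0 < ρ := hρ
    simp only [add_sub_cancel_left, smul_eq_mul]
    rw [abs_of_pos (by positivity : 0 < ε⁻¹), show ε⁻¹ * ρ * ε = ρ by field_simp]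
    by_cases h : ε < ρ
    · rw [indicator_of_mem (mem_Ioi.2 h)]
      have hk : kap (1 + ε⁻¹ * ρ) = 1 := by
        rw [kap, if_pos]
        have : 1 < ε⁻¹ * ρ := by
          rw [inv_mul_eq_div, one_lt_div hε]; exact h
        linarith
      rw [hk]
      obtain ⟨k, rfl⟩ : ∃ k, n = k + 1 := ⟨n - 1, by omega⟩
      simp only [Nat.add_sub_cancel]
      have e : 1 + ε⁻¹ * ρ = (ε + ρ) / ε := by field_simp
      rw [e, div_pow, div_pow, mul_pow, inv_pow]
      field_simp
      ring
    · rw [indicator_of_notMem (by simpa using h)]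
      have hk : kap (1 + ε⁻¹ * ρ) = 0 := by
        rw [kap, if_neg]
        have : ε⁻¹ * ρ ≤ 1 := by
          rw [inv_mul_eq_div, div_le_one hε]; linarith
        linarith
      rw [hk]; ring
  · intro ρ _
    have := ((hasDerivAt_id ρ).const_mul ε⁻¹).const_add 1
    simpa using this.hasDerivWithinAt
  · intro a _ b _ hab
    have : ε⁻¹ * a = ε⁻¹ * b := by simpa using hab
    exact mul_left_cancel₀ (by positivity) this

lemma ceps_tendsto (hn : 1 ≤ n) (hψ : PsiOK n R P ψ) {x : EE n} (hx : ‖x‖ ≤ R) :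
    Tendsto (fun ε : ℝ => ∫ t in Ioi (1:ℝ),
      kap t * t ^ (n - 1) * (((t - 1) ^ n)⁻¹ * Ph n ψ x ((t - 1) * ε))) (𝓝[>] 0)
      (𝓝 (cc n ψ x)) := by
  have hev : ∀ᶠ ε : ℝ in 𝓝[>] 0, 0 < ε := self_mem_nhdsWithin
  have key : Tendsto (fun ε : ℝ => ∫ ρ in Ioi (0:ℝ),
      (Ioi ε).indicator (fun ρ => ((ε + ρ) / ρ) ^ (n - 1) * (Ph n ψ x ρ / ρ)) ρ) (𝓝[>] 0)
      (𝓝 (cc n ψ x)) := by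
    refine tendsto_integral_filter_of_dominated_convergence
      (fun ρ => 2 ^ (n - 1) * (Ioc 0 (2 * R)).indicator (fun _ => P * (2 * R) ^ (n - 1) * VV n) ρ)
      ?_ ?_ ((ind_integrable _ _).const_mul _) ?_
    · refine Eventually.of_forall fun ε => ?_
      refine (Measurable.indicator ?_ measurableSet_Ioi).aestronglyMeasurable
      have := (Ph_meas hψ.cont x).measurable
      fun_prop
    · filter_upwards [hev] with ε hε
      refine (ae_restrict_iff' measurableSet_Ioi).2 (Eventually.of_forall fun ρ hρ => ?_)
      have hρ0 : 0 < ρ := hρ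
      have hb := Ph_div_bound hn hψ hx hρ0
      by_cases h : ε < ρ
      · rw [indicator_of_mem (mem_Ioi.2 h), norm_mul]
        refine mul_le_mul ?_ hb (norm_nonneg _) (by positivity)
        rw [norm_pow, Real.norm_eq_abs, abs_of_pos (by positivity)]
        gcongr
        rw [div_le_iff₀ hρ0]; linarith
      · rw [indicator_of_notMem (by simpa using h), norm_zero]
        exact mul_nonneg (by positivity) ((abs_nonneg _).trans hb)
    · refine (ae_restrict_iff' measurableSet_Ioi).2 (Eventually.of_forall fun ρ hρ => ?_)
      have hρ0 : 0 < ρ := hρ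
      have h1 : Tendsto (fun ε : ℝ => ((ε + ρ) / ρ) ^ (n - 1) * (Ph n ψ x ρ / ρ)) (𝓝[>] 0)
          (𝓝 (((0 + ρ) / ρ) ^ (n - 1) * (Ph n ψ x ρ / ρ))) := by
        refine Tendsto.mono_left (Continuous.tendsto ?_ 0) nhdsWithin_le_nhds
        fun_prop
      rw [zero_add, div_self hρ0.ne', one_pow, one_mul] at h1
      refine h1.congr' ?_
      have : ∀ᶠ ε : ℝ in 𝓝[>] 0, ε < ρ := nhdsWithin_le_nhds (Iio_mem_nhds hρ0)
      filter_upwards [this] with ε h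
      rw [indicator_of_mem (mem_Ioi.2 h)]
  refine key.congr' ?_
  filter_upwards [hev] with ε hε
  exact (ceps_eq hn x hε).symm

lemma set_meas (x : EE n) (ε : ℝ) : MeasurableSet {y : EE n | ε < ‖x - y‖} :=
  measurableSet_lt measurable_const (by fun_prop)

lemma trunc_tendsto (hn : 1 ≤ n) (x : EE n) {F : EE n → ℝ} (hF : Integrable F) :
    Tendsto (fun ε : ℝ => ∫ y in {y : EE n | ε < ‖x - y‖}, F y) (𝓝[>] 0) (𝓝 (∫ y, F y)) := by
  have : Nonempty (Fin n) := ⟨⟨0, hn⟩⟩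
  have : Tendsto (fun ε : ℝ => ∫ y, {y : EE n | ε < ‖x - y‖}.indicator F y) (𝓝[>] 0)
      (𝓝 (∫ y, F y)) := by
    refine tendsto_integral_filter_of_dominated_convergence (fun y => ‖F y‖) ?_ ?_ hF.norm ?_
    · exact Eventually.of_forall fun ε => hF.aestronglyMeasurable.indicator (set_meas x ε)
    · exact Eventually.of_forall fun ε => Eventually.of_forall fun y => norm_indicator_le_norm_self _ _
    · have : ∀ᵐ y : EE n, y ≠ x := by simp [ae_iff]
      filter_upwards [this] with y hy
      refine tendsto_const_nhds.congr' ?_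
      have hp : 0 < ‖x - y‖ := norm_pos_iff.2 (sub_ne_zero.2 hy.symm)
      have : ∀ᶠ ε : ℝ in 𝓝[>] 0, ε < ‖x - y‖ := nhdsWithin_le_nhds (Iio_mem_nhds hp)
      filter_upwards [this] with ε h
      rw [indicator_of_mem (show y ∈ {y : EE n | ε < ‖x - y‖} from h)]
  refine this.congr fun ε => integral_indicator (set_meas x ε)

lemma fub_integrable (hψ : PsiOK n R P ψ) (hg : GOK n α R M g) {x : EE n} {ε : ℝ} (hε : 0 < ε) :
    Integrable (Function.uncurry fun (y : EE n) (t : ℝ) => g y * (t ^ (n - 1) * ψ (y + t • (x - y))))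
      ((volume.restrict {y : EE n | ε < ‖x - y‖}).prod (volume.restrict (Ioi (1:ℝ)))) := by
  have h1 := hψ.cont
  have h2 := hg.cont
  rw [Measure.prod_restrict]
  have hc : Continuous (Function.uncurry fun (y : EE n) (t : ℝ) =>
      g y * (t ^ (n - 1) * ψ (y + t • (x - y)))) := by
    unfold Function.uncurry
    fun_prop
  have hi : IntegrableOn (Function.uncurry fun (y : EE n) (t : ℝ) =>
      g y * (t ^ (n - 1) * ψ (y + t • (x - y)))) (closedBall 0 R ×ˢ Icc 1 (2 * R / ε))
      (volume.prod volume) :=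
    hc.continuousOn.integrableOn_compact ((isCompact_closedBall _ _).prod isCompact_Icc)
  refine hi.of_forall_sdiff_eq_zero ((set_meas x ε).prod measurableSet_Ioi) ?_
  rintro ⟨y, t⟩ ⟨⟨hy, ht⟩, hnot⟩
  by_contra hne
  apply hnot
  simp only [Function.uncurry_apply_pair] at hne
  have hy1 := hg.supp _ (left_ne_zero_of_mul hne)
  have hy2 := hψ.supp _ (right_ne_zero_of_mul (right_ne_zero_of_mul hne))
  have hy3 : ε < ‖x - y‖ := hy
  have ht1 : 1 < t := ht
  refine ⟨by simpa using hy1, ht1.le, ?_⟩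
  rw [le_div_iff₀ hε]
  have e : t • (x - y) = (y + t • (x - y)) - y := by module
  have : t * ‖x - y‖ ≤ R + R := by
    rw [← abs_of_pos (show 0 < t by linarith), ← Real.norm_eq_abs, ← norm_smul, e]
    exact (norm_sub_le _ _).trans (add_le_add hy2 hy1)
  show t * ε ≤ 2 * R
  nlinarith

lemma J_meas (hψ : Continuous ψ) (hg : Continuous g) (x : EE n) (S : Set (EE n)) :
    StronglyMeasurable fun t : ℝ =>
      t ^ (n - 1) * ∫ y in S, (g y - kap t * g x) * ψ (y + t • (x - y)) := by
  have h1 : StronglyMeasurable fun t : ℝ => t ^ (n - 1) :=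
    Continuous.stronglyMeasurable (by fun_prop)
  have hk : Measurable kap :=
    Measurable.ite (measurableSet_lt measurable_const measurable_id) measurable_const
      measurable_const
  have h2 : StronglyMeasurable fun p : ℝ × EE n =>
      (g p.2 - kap p.1 * g x) * ψ (p.2 + p.1 • (x - p.2)) := by
    apply Measurable.stronglyMeasurable
    have e1 : Measurable fun p : ℝ × EE n => g p.2 := hg.measurable.comp measurable_snd
    have e2 : Measurable fun p : ℝ × EE n => ψ (p.2 + p.1 • (x - p.2)) :=
      Continuous.measurable (by fun_prop)
    exact (e1.sub ((hk.comp measurable_fst).mul_const _)).mul e2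
  exact h1.mul h2.integral_prod_right'

lemma J_tendsto (hn : 1 ≤ n) (hα : 0 < α) (hα1 : α < 1) (hψ : PsiOK n R P ψ)
    (hg : GOK n α R M g) {x : EE n} (hx : ‖x‖ ≤ R) :
    Tendsto (fun ε : ℝ => ∫ t in Ioi (1:ℝ), t ^ (n - 1) *
      ∫ y in {y : EE n | ε < ‖x - y‖}, (g y - kap t * g x) * ψ (y + t • (x - y))) (𝓝[>] 0)
      (𝓝 (II n ψ g x)) := by
  refine tendsto_integral_filter_of_dominated_convergence
    (fun t => ((2 + 4 * R) * P * (4 * R) ^ n * VV n * M) * t ^ (-1 - α)) ?_ ?_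
    ((integrableOn_Ioi_rpow_of_lt (show -1 - α < -1 by linarith) one_pos).const_mul _) ?_
  · exact Eventually.of_forall fun ε => (J_meas hψ.cont hg.cont x _).aestronglyMeasurable
  · exact Eventually.of_forall fun ε => (ae_restrict_iff' measurableSet_Ioi).2
      (Eventually.of_forall fun t ht => J_bound hn hα hα1 hψ hg hx ht _)
  · refine (ae_restrict_iff' measurableSet_Ioi).2 (Eventually.of_forall fun t ht => ?_)
    rw [NN_eq hψ hg x ht (kap t * g x)]
    refine (trunc_tendsto hn x ?_).const_mul _
    simp_rw [sub_mul]
    exact (integrable_g_psi hψ hg x t).sub ((integrable_psi hψ x ht).const_mul _)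

lemma trunc_eq (hn : 1 ≤ n) (hα : 0 < α) (hα1 : α < 1) (hψ : PsiOK n R P ψ)
    (hg : GOK n α R M g) {x : EE n} (hx : ‖x‖ ≤ R) {ε : ℝ} (hε : 0 < ε) :
    ∫ y in {y : EE n | ε < ‖x - y‖}, g y * ∫ t in Ioi (1:ℝ), t ^ (n - 1) * ψ (y + t • (x - y)) =
    (∫ t in Ioi (1:ℝ), t ^ (n - 1) *
      ∫ y in {y : EE n | ε < ‖x - y‖}, (g y - kap t * g x) * ψ (y + t • (x - y))) +
    g x * ∫ t in Ioi (1:ℝ), kap t * t ^ (n - 1) * (((t - 1) ^ n)⁻¹ * Ph n ψ x ((t - 1) * ε)) := by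
  have hF := fub_integrable (x := x) hψ hg hε
  simp_rw [← integral_const_mul]
  rw [integral_integral_swap hF]
  have hJ : IntegrableOn (fun t : ℝ => t ^ (n - 1) *
      ∫ y in {y : EE n | ε < ‖x - y‖}, (g y - kap t * g x) * ψ (y + t • (x - y))) (Ioi 1) := by
    refine Integrable.mono' ((integrableOn_Ioi_rpow_of_lt (show -1 - α < -1 by linarith)
      one_pos).const_mul ((2 + 4 * R) * P * (4 * R) ^ n * VV n * M))
      (J_meas hψ.cont hg.cont x _).aestronglyMeasurable
      ((ae_restrict_iff' measurableSet_Ioi).2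
      (Eventually.of_forall fun t ht => J_bound hn hα hα1 hψ hg hx ht _))
  have hA := hF.integral_prod_right
  simp only [Function.uncurry_apply_pair] at hA
  have hpt : ∀ t ∈ Ioi (1:ℝ), (∫ y in {y : EE n | ε < ‖x - y‖},
      g y * (t ^ (n - 1) * ψ (y + t • (x - y)))) - t ^ (n - 1) *
      ∫ y in {y : EE n | ε < ‖x - y‖}, (g y - kap t * g x) * ψ (y + t • (x - y)) =
      g x * (kap t * t ^ (n - 1) * (((t - 1) ^ n)⁻¹ * Ph n ψ x ((t - 1) * ε))) := by
    intro t ht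
    have ht1 : 0 < t - 1 := by have : 1 < t := ht; linarith
    rw [← Ph_scale ψ x ht1]
    have e : ∀ y, x + (t - 1) • (x - y) = y + t • (x - y) := fun y => by module
    simp_rw [e, sub_mul]
    rw [integral_sub (integrable_g_psi hψ hg x t).integrableOn
      ((integrable_psi hψ x ht).const_mul _).integrableOn, integral_const_mul]
    have e2 : ∀ y, g y * (t ^ (n - 1) * ψ (y + t • (x - y))) =
      t ^ (n - 1) * (g y * ψ (y + t • (x - y))) := fun y => by ring
    simp_rw [e2]
    rw [integral_const_mul]
    ring
  rw [← setIntegral_congr_fun measurableSet_Ioi hpt, integral_sub hA hJ]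
  simp_rw [integral_const_mul]
  ring

lemma pv_tendsto (hn : 1 ≤ n) (hα : 0 < α) (hα1 : α < 1) (hψ : PsiOK n R P ψ)
    (hg : GOK n α R M g) {x : EE n} (hx : ‖x‖ ≤ R) :
    Tendsto (fun ε : ℝ => ∫ y in {y : EE n | ε < ‖x - y‖},
      g y * ∫ t in Ioi (1:ℝ), t ^ (n - 1) * ψ (y + t • (x - y))) (𝓝[>] 0)
      (𝓝 (II n ψ g x + g x * cc n ψ x)) := by
  refine ((J_tendsto hn hα hα1 hψ hg hx).add
    ((ceps_tendsto hn hψ hx).const_mul (g x))).congr' ?_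
  filter_upwards [self_mem_nhdsWithin] with ε hε
  exact (trunc_eq hn hα hα1 hψ hg hx hε).symm

lemma kernel_eq (hn : 1 ≤ n) (ψ : EE n → ℝ) (a b : ℝ) (x y : EE n) :
    ∫ s in Ioo (0:ℝ) 1, a * b * ψ (y + s⁻¹ • (x - y)) * (s ^ (n + 1))⁻¹ =
      a * b * ∫ t in Ioi (1:ℝ), t ^ (n - 1) * ψ (y + t • (x - y)) := by
  have him : (fun t : ℝ => t⁻¹) '' Ioi 1 = Ioo 0 1 := by
    ext s
    simp only [mem_image, mem_Ioi, mem_Ioo]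
    constructor
    · rintro ⟨t, ht, rfl⟩
      exact ⟨by positivity, inv_lt_one_of_one_lt₀ ht⟩
    · rintro ⟨h0, h1⟩
      exact ⟨s⁻¹, (one_lt_inv₀ h0).2 h1, inv_inv s⟩
  rw [← him, integral_image_eq_integral_abs_deriv_smul (f' := fun t => -(t ^ 2)⁻¹)
    measurableSet_Ioi, ← integral_const_mul]
  · refine setIntegral_congr_fun measurableSet_Ioi fun t ht => ?_
    have ht0 : (0:ℝ) < t := lt_trans one_pos ht
    simp only [inv_inv, smul_eq_mul, abs_neg]
    rw [abs_of_pos (by positivity)]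
    obtain ⟨k, rfl⟩ : ∃ k, n = k + 1 := ⟨n - 1, by omega⟩
    simp only [Nat.add_sub_cancel, inv_pow, inv_inv]
    field_simp
    ring
  · intro t ht
    have ht0 : (0:ℝ) < t := lt_trans one_pos ht
    exact (hasDerivAt_inv ht0.ne').hasDerivWithinAt
  · intro a _ b _ hab
    exact inv_injective hab
end
section
variable {n : ℕ} {α R P : ℝ} {ψ : EE n → ℝ}

lemma Q_bounds (hn : 1 ≤ n) (hα : 0 < α) (hα1 : α < 1) (hψ : PsiOK n R P ψ) :
    ∃ C : ℝ, 0 ≤ C ∧ ∀ (M : ℝ) (g : EE n → ℝ), GOK n α R M g →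
      (∀ x, ‖x‖ ≤ R → |II n ψ g x + g x * cc n ψ x| ≤ C * M) ∧
      (∀ x x', ‖x‖ ≤ R → ‖x'‖ ≤ R →
        |(II n ψ g x + g x * cc n ψ x) - (II n ψ g x' + g x' * cc n ψ x')| ≤
          C * M * ‖x - x'‖ ^ α) := by
  have hR := hψ.R1
  have hP := hψ.P0
  have hV := VV_nonneg n
  have hα2 : 0 < 1 - α := by linarith
  obtain ⟨A, hA⟩ : ∃ A, A = ((2 + 4 * R) * P * (4 * R) ^ n * VV n) * α⁻¹ := ⟨_, rfl⟩
  obtain ⟨B, hB⟩ : ∃ B, B = 2 * R * (P * (2 * R) ^ (n - 1) * VV n) := ⟨_, rfl⟩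
  obtain ⟨D, hD⟩ : ∃ D, D = ((2 + (4 * R + 1)) * P * (4 * R + 1) ^ n * VV n) * (1 - α)⁻¹ +
        2 * ((2 + 4 * R) * P * (4 * R) ^ n * VV n) * α⁻¹ := ⟨_, rfl⟩
  have hA0 : 0 ≤ A := by rw [hA]; positivity
  have hB0 : 0 ≤ B := by rw [hB]; positivity
  have hD0 : 0 ≤ D := by rw [hD]; positivity
  refine ⟨2 * A + 2 * B + D, by positivity, fun M g hg => ?_⟩
  have hM := hg.M0
  have bd : ∀ x, ‖x‖ ≤ R → |II n ψ g x + g x * cc n ψ x| ≤ (A + B) * M := by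
    intro x hx
    have h1 : |II n ψ g x| ≤ A * M := (II_bound hn hα hα1 hψ hg hx).trans_eq (by rw [hA]; ring)
    have h2 : |g x * cc n ψ x| ≤ M * B := by
      rw [abs_mul]
      exact mul_le_mul (hg.bd x) ((cc_bound hn hψ hx).trans_eq hB.symm) (abs_nonneg _) hM
    exact (abs_add_le _ _).trans (by linarith)
  refine ⟨fun x hx => (bd x hx).trans ?_, fun x x' hx hx' => ?_⟩
  · exact mul_le_mul_of_nonneg_right (by linarith) hM
  rcases (norm_nonneg (x - x')).eq_or_lt with h0 | h0
  · have : x = x' := sub_eq_zero.1 (norm_eq_zero.1 h0.symm)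
    subst this
    rw [sub_self, abs_zero]; positivity
  have hp : 0 < ‖x - x'‖ ^ α := Real.rpow_pos_of_pos h0 _
  by_cases h1 : ‖x - x'‖ ≤ 1
  · have e1 : |II n ψ g x - II n ψ g x'| ≤ D * M * ‖x - x'‖ ^ α :=
      (II_diff hn hα hα1 hψ hg hx hx' h0 h1).trans_eq (by rw [hD])
    have hle : ‖x - x'‖ ≤ ‖x - x'‖ ^ α := Real.self_le_rpow_of_le_one h0.le h1 hα1.le
    have e2 : |g x * (cc n ψ x - cc n ψ x')| ≤ M * (B * ‖x - x'‖ ^ α) := by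
      rw [abs_mul]
      refine mul_le_mul (hg.bd x) ((cc_diff hn hψ hx hx').trans ?_) (abs_nonneg _) hM
      calc _ = B * ‖x - x'‖ := by rw [hB]; ring
        _ ≤ _ := by gcongr
    have e3 : |(g x - g x') * cc n ψ x'| ≤ M * ‖x - x'‖ ^ α * B := by
      rw [abs_mul]
      exact mul_le_mul (hg.hol x x') ((cc_bound hn hψ hx').trans_eq hB.symm) (abs_nonneg _)
        (by positivity)
    have e : (II n ψ g x + g x * cc n ψ x) - (II n ψ g x' + g x' * cc n ψ x') =
      (II n ψ g x - II n ψ g x') + g x * (cc n ψ x - cc n ψ x') + (g x - g x') * cc n ψ x' := by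
      ring
    rw [e]
    refine (abs_add_three _ _ _).trans ?_
    have : 0 ≤ A * M * ‖x - x'‖ ^ α := by positivity
    linarith
  · have h2 : 1 ≤ ‖x - x'‖ ^ α := Real.one_le_rpow (not_le.1 h1).le hα.le
    refine (abs_sub _ _).trans ((add_le_add (bd x hx) (bd x' hx')).trans ?_)
    calc (A + B) * M + (A + B) * M ≤ (2 * A + 2 * B + D) * M * 1 := by
          have : 0 ≤ D * M := by positivity
          linarith
      _ ≤ _ := by gcongr

lemma smooth_bounds {χ : EE n → ℝ} (hχ : ContDiff ℝ (⊤ : ℕ∞) χ) (hχc : HasCompactSupport χ) :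
    ∃ R P : ℝ, 1 ≤ R ∧ 0 ≤ P ∧ (∀ x, |χ x| ≤ P) ∧ (∀ x y, |χ x - χ y| ≤ P * ‖x - y‖) ∧
      (∀ x, χ x ≠ 0 → ‖x‖ ≤ R) := by
  obtain ⟨C, hC⟩ := hχ.continuous.bounded_above_of_compact_support hχc
  obtain ⟨L, hL⟩ := hχ.lipschitzWith_of_hasCompactSupport hχc (by simp)
  obtain ⟨R, hR⟩ := hχc.isCompact.isBounded.exists_norm_le
  refine ⟨max R 1, max C L, le_max_right _ _, le_max_of_le_right L.2, fun x =>
    (hC x).trans (le_max_left _ _), fun x y => ?_, fun x hx =>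
    (hR x (subset_tsupport _ hx)).trans (le_max_left _ _)⟩
  have := hL.dist_le_mul x y
  rw [Real.dist_eq, dist_eq_norm] at this
  exact this.trans (by gcongr; exact le_max_right _ _)

lemma hol_of_lip {χ : EE n → ℝ} {X : ℝ} (hα : 0 < α) (hα1 : α < 1) (hX : 0 ≤ X)
    (hb : ∀ x, |χ x| ≤ X) (hl : ∀ x y, |χ x - χ y| ≤ X * ‖x - y‖) (x y : EE n) :
    |χ x - χ y| ≤ 2 * X * ‖x - y‖ ^ α := by
  by_cases h1 : ‖x - y‖ ≤ 1
  · have hle : ‖x - y‖ ≤ ‖x - y‖ ^ α := Real.self_le_rpow_of_le_one (norm_nonneg _) h1 hα1.le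
    have hp : 0 ≤ ‖x - y‖ ^ α := by positivity
    have := hl x y
    nlinarith
  · have h2 : 1 ≤ ‖x - y‖ ^ α := Real.one_le_rpow (not_le.1 h1).le hα.le
    refine (abs_sub _ _).trans ?_
    have := hb x
    have := hb y
    nlinarith

lemma lambdaNorm_spec {f : EE n → ℝ} (hM : ∃ M : ℝ, ∀ x, |f x| ≤ M)
    (hK : ∃ K : ℝ, ∀ x y, |f x - f y| ≤ K * ‖x - y‖ ^ α) :
    0 ≤ lambdaNorm n α f ∧ (∀ x, |f x| ≤ lambdaNorm n α f) ∧
      (∀ x y, |f x - f y| ≤ lambdaNorm n α f * ‖x - y‖ ^ α) := by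
  obtain ⟨M, hM⟩ := hM
  obtain ⟨K, hK⟩ := hK
  have p1 : 0 ≤ ⨆ x : EE n, |f x| := Real.iSup_nonneg fun _ => abs_nonneg _
  have p2 : 0 ≤ ⨆ p : {p : EE n × EE n // p.1 ≠ p.2},
    |f p.1.1 - f p.1.2| / ‖p.1.1 - p.1.2‖ ^ α := Real.iSup_nonneg fun _ => by positivity
  have hpos : ∀ x y : EE n, x ≠ y → 0 < ‖x - y‖ ^ α := fun x y h =>
    Real.rpow_pos_of_pos (norm_pos_iff.2 (sub_ne_zero.2 h)) _
  have b1 : BddAbove (range fun x : EE n => |f x|) := ⟨M, by rintro _ ⟨x, rfl⟩; exact hM x⟩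
  have b2 : BddAbove (range fun p : {p : EE n × EE n // p.1 ≠ p.2} =>
      |f p.1.1 - f p.1.2| / ‖p.1.1 - p.1.2‖ ^ α) := by
    refine ⟨K, ?_⟩
    rintro _ ⟨p, rfl⟩
    exact (div_le_iff₀ (hpos _ _ p.2)).2 (hK _ _)
  refine ⟨add_nonneg p1 p2, fun x => ?_, fun x y => ?_⟩
  · exact (le_ciSup b1 x).trans (le_add_of_nonneg_right p2)
  · by_cases h : x = y
    · subst h
      rw [sub_self, abs_zero]
      exact mul_nonneg (add_nonneg p1 p2) (by positivity)
    · rw [← div_le_iff₀ (hpos x y h)]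
      exact (le_ciSup b2 ⟨(x, y), h⟩).trans (le_add_of_nonneg_left p1)

lemma lambdaNorm_le {f : EE n → ℝ} {A B : ℝ} (hA : 0 ≤ A) (hB : 0 ≤ B) (h1 : ∀ x, |f x| ≤ A)
    (h2 : ∀ x y, |f x - f y| ≤ B * ‖x - y‖ ^ α) : lambdaNorm n α f ≤ A + B := by
  refine add_le_add (Real.iSup_le h1 hA) (Real.iSup_le (fun p => ?_) hB)
  exact (div_le_iff₀ (Real.rpow_pos_of_pos (norm_pos_iff.2 (sub_ne_zero.2 p.2)) _)).2 (h2 _ _)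
end

/-- The singular integral operator with kernel
`H(x,y) = ∫₀¹ χ(x) χ(y) ψ(y + (x−y)/s) s^{−(n+1)} ds` is well defined as a principal
value on `Λ_α(ℝⁿ)` and is bounded on `Λ_α(ℝⁿ)` for every `0 < α < 1`. -/
theorem singular_integral_bounded_on_lipschitz
    (n : ℕ) (hn : 2 ≤ n)
    (Ω B : Set (EuclideanSpace ℝ (Fin n)))
    (hΩo : IsOpen Ω) (hΩb : Bornology.IsBounded Ω)
    (hBball : ∃ c r, 0 < r ∧ B = Metric.ball c r)
    (hBΩ : B ⊆ Ω)
    (hstar : ∀ x ∈ Ω, ∀ y ∈ B, segment ℝ x y ⊆ Ω)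
    (Bt : Set (EuclideanSpace ℝ (Fin n)))
    (hBt : ∃ c r, 0 < r ∧ Bt = Metric.ball c r)
    (hΩBt : closure Ω ⊆ Bt)
    (χ : EuclideanSpace ℝ (Fin n) → ℝ)
    (hχ : ContDiff ℝ (⊤ : ℕ∞) χ) (hχc : HasCompactSupport χ)
    (hχsupp : tsupport χ ⊆ Bt) (hχ1 : ∀ x ∈ Ω, χ x = 1)
    (ψ : EuclideanSpace ℝ (Fin n) → ℝ)
    (hψ : ContDiff ℝ (⊤ : ℕ∞) ψ) (hψc : HasCompactSupport ψ)
    (hψsupp : tsupport ψ ⊆ B) (hψint : ∫ x, ψ x = 0)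
    (H : EuclideanSpace ℝ (Fin n) → EuclideanSpace ℝ (Fin n) → ℝ)
    (hH : ∀ x y, x ≠ y → H x y =
      ∫ s in Set.Ioo (0:ℝ) 1, χ x * χ y * ψ (y + s⁻¹ • (x - y)) * (s ^ (n + 1))⁻¹) :
    ∀ α : ℝ, 0 < α → α < 1 → ∃ C : ℝ,
      ∀ f : EuclideanSpace ℝ (Fin n) → ℝ,
        Continuous f →
        (∃ M : ℝ, ∀ x, |f x| ≤ M) →
        (∃ K : ℝ, ∀ x y, |f x - f y| ≤ K * ‖x - y‖ ^ α) →
        ∃ Tf : EuclideanSpace ℝ (Fin n) → ℝ,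
          (∀ x : EuclideanSpace ℝ (Fin n),
            Tendsto (fun ε : ℝ =>
                ∫ y in {y : EuclideanSpace ℝ (Fin n) | ε < ‖x - y‖}, H x y * f y)
              (𝓝[>] (0:ℝ)) (𝓝 (Tf x))) ∧
          lambdaNorm n α Tf ≤ C * lambdaNorm n α f := by
  intro α hα hα1
  have hn1 : 1 ≤ n := by omega
  obtain ⟨R1, X, hR1, hX, hχb, hχl, hχs⟩ := smooth_bounds hχ hχc
  obtain ⟨R2, P, hR2, hP, hψb, hψl, hψs⟩ := smooth_bounds hψ hψc
  obtain ⟨R, hR⟩ : ∃ R, R = max R1 R2 := ⟨_, rfl⟩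
  have hχs' : ∀ x, χ x ≠ 0 → ‖x‖ ≤ R := fun x hx => (hχs x hx).trans (hR ▸ le_max_left _ _)
  have hχh := hol_of_lip hα hα1 hX hχb hχl
  have hΨ : PsiOK n R P ψ :=
    ⟨hR2.trans (hR ▸ le_max_right _ _), hP, hψ.continuous, hψb, hψl,
      fun x hx => (hψs x hx).trans (hR ▸ le_max_right _ _), hψint⟩
  obtain ⟨C, hC, hQ⟩ := Q_bounds hn1 hα hα1 hΨ
  refine ⟨X * (C * (3 * X)) + 3 * X * (C * (3 * X)), fun f hf hfM hfK => ?_⟩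
  obtain ⟨hA, hfb, hfh⟩ := lambdaNorm_spec hfM hfK
  obtain ⟨A, hAdef⟩ : ∃ A, A = lambdaNorm n α f := ⟨_, rfl⟩
  rw [← hAdef] at hA hfb hfh ⊢
  obtain ⟨g, hgdef⟩ : ∃ g : EE n → ℝ, g = fun y => χ y * f y := ⟨_, rfl⟩
  have hG : GOK n α R (3 * X * A) g := by
    refine ⟨by positivity, ?_, fun x => ?_, fun x y => ?_, fun x hx => ?_⟩
    · rw [hgdef]; exact hχ.continuous.mul hf
    · simp only [hgdef, abs_mul]
      have : |χ x| * |f x| ≤ X * A := mul_le_mul (hχb x) (hfb x) (abs_nonneg _) hX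
      have : 0 ≤ X * A := by positivity
      linarith
    · have e : g x - g y = χ x * (f x - f y) + (χ x - χ y) * f y := by rw [hgdef]; ring
      rw [e]
      refine (abs_add_le _ _).trans ?_
      rw [abs_mul, abs_mul]
      have h1 : |χ x| * |f x - f y| ≤ X * (A * ‖x - y‖ ^ α) :=
        mul_le_mul (hχb x) (hfh x y) (abs_nonneg _) hX
      have h2 : |χ x - χ y| * |f y| ≤ 2 * X * ‖x - y‖ ^ α * A :=
        mul_le_mul (hχh x y) (hfb y) (abs_nonneg _) (by positivity)
      linarith
    · rw [hgdef] at hx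
      exact hχs' x (left_ne_zero_of_mul hx)
  obtain ⟨hQb, hQh⟩ := hQ _ g hG
  obtain ⟨Q, hQdef⟩ : ∃ Q : EE n → ℝ, Q = fun x => II n ψ g x + g x * cc n ψ x := ⟨_, rfl⟩
  have hQb' : ∀ x, ‖x‖ ≤ R → |Q x| ≤ C * (3 * X * A) := fun x hx => by
    rw [hQdef]; exact hQb x hx
  have hQh' : ∀ x x', ‖x‖ ≤ R → ‖x'‖ ≤ R → |Q x - Q x'| ≤ C * (3 * X * A) * ‖x - x'‖ ^ α :=
    fun x x' hx hx' => by rw [hQdef]; exact hQh x x' hx hx'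
  refine ⟨fun x => χ x * Q x, fun x => ?_, ?_⟩
  · have heq : ∀ ε : ℝ, 0 < ε → ∫ y in {y : EE n | ε < ‖x - y‖}, H x y * f y =
        χ x * ∫ y in {y : EE n | ε < ‖x - y‖},
          g y * ∫ t in Ioi (1:ℝ), t ^ (n - 1) * ψ (y + t • (x - y)) := by
      intro ε hε
      rw [← integral_const_mul]
      refine setIntegral_congr_fun (set_meas x ε) fun y hy => ?_
      have hxy : x ≠ y := by
        rintro rfl
        have : ε < ‖x - x‖ := hy
        rw [sub_self, norm_zero] at this
        linarith
      simp only [hgdef]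
      rw [hH x y hxy, kernel_eq hn1]
      ring
    have hlim : Tendsto (fun ε : ℝ => χ x * ∫ y in {y : EE n | ε < ‖x - y‖},
          g y * ∫ t in Ioi (1:ℝ), t ^ (n - 1) * ψ (y + t • (x - y))) (𝓝[>] (0:ℝ))
          (𝓝 (χ x * Q x)) := by
      by_cases hx : χ x = 0
      · simp [hx]
      · rw [hQdef]
        exact (pv_tendsto hn1 hα hα1 hΨ hG (hχs' x hx)).const_mul _
    refine hlim.congr' ?_
    filter_upwards [self_mem_nhdsWithin] with ε hε
    exact (heq ε hε).symm
  · have key : lambdaNorm n α (fun x => χ x * Q x) ≤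
        X * (C * (3 * X * A)) + 3 * X * (C * (3 * X * A)) := by
      have hB : 0 ≤ C * (3 * X * A) := by positivity
      refine lambdaNorm_le (by positivity) (by positivity) (fun x => ?_) (fun x y => ?_)
      · by_cases hx : χ x = 0
        · simp only [hx, zero_mul, abs_zero]; positivity
        · rw [abs_mul]
          exact mul_le_mul (hχb x) (hQb' x (hχs' x hx)) (abs_nonneg _) hX
      · have hp : 0 ≤ ‖x - y‖ ^ α := by positivity
        have hXB : 0 ≤ X * (C * (3 * X * A)) * ‖x - y‖ ^ α := by positivity
        by_cases hx : χ x = 0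
        · by_cases hy : χ y = 0
          · simp only [hx, hy, zero_mul, sub_self, abs_zero]; positivity
          · have e : χ x * Q x - χ y * Q y = (χ x - χ y) * Q y := by rw [hx]; ring
            rw [e, abs_mul]
            have := mul_le_mul (hχh x y) (hQb' y (hχs' y hy)) (abs_nonneg _) (by positivity)
            linarith
        · by_cases hy : χ y = 0
          · have e : χ x * Q x - χ y * Q y = (χ x - χ y) * Q x := by rw [hy]; ring
            rw [e, abs_mul]
            have := mul_le_mul (hχh x y) (hQb' x (hχs' x hx)) (abs_nonneg _) (by positivity)
            linarith
          · have e : χ x * Q x - χ y * Q y = χ x * (Q x - Q y) + (χ x - χ y) * Q y := by ring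
            rw [e]
            refine (abs_add_le _ _).trans ?_
            rw [abs_mul, abs_mul]
            have h1 := mul_le_mul (hχb x) (hQh' x y (hχs' x hx) (hχs' y hy)) (abs_nonneg _) hX
            have h2 := mul_le_mul (hχh x y) (hQb' y (hχs' y hy)) (abs_nonneg _) (by positivity)
            linarith
    exact key.trans_eq (by ring)
end
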